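/- arXiv:2304.02863 — 5 statements merged into one kernel-verified Lean document; each statement's English description precedes it below -/
import Mathlib

section
/- Let μ be a nonzero σ-finite measure on a measurable space X and let g : X × X → (0,∞) be jointly measurable with ∫_X g(u, x) dμ(x) = 1 for every u ∈ X. Write g⁻(x) := ∫_X g(y, x) dμ(y), and assume g⁻(x) < ∞ for μ-almost every x. Define h(u, v) := ∫_X g(u, x) g(v, x) / g⁻(x) dμ(x), where the integrand is interpreted as 0 on the null set where g⁻(x) = ∞. Then h is symmetric (h(u,v) = h(v,u)), h(u, v) > 0 for all u, v ∈ X, and ∫_X h(u, v) dμ(v) = 1 for every u ∈ X. -/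
open MeasureTheory ENNReal

/-- Let `μ` be a nonzero σ-finite measure on a measurable space `X` and let
`g : X × X → (0,∞)` be jointly measurable with `∫ g u x dμ x = 1` for every `u`.  Write
`g⁻ x := ∫ g y x dμ y` and assume `g⁻ x < ∞` for `μ`-a.e. `x`.  Define
`h u v := ∫ g u x * g v x / g⁻ x dμ x` (the integrand vanishing where `g⁻ x = ∞`, as is
automatic for `ℝ≥0∞`-division).  Then `h` is symmetric, strictly positive, and
`∫ h u v dμ v = 1` for every `u`. -/
theorem stmt5 {X : Type*} [MeasurableSpace X] (μ : Measure X) [SigmaFinite μ] (hμ0 : μ ≠ 0)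
    (g : X → X → ℝ≥0∞) (hgm : Measurable (Function.uncurry g))
    (hgpos : ∀ u v : X, 0 < g u v) (hgfin : ∀ u v : X, g u v < ⊤)
    (hg1 : ∀ u : X, ∫⁻ x, g u x ∂μ = 1)
    (hgminus : ∀ᵐ x ∂μ, (∫⁻ y, g y x ∂μ) < ⊤) :
    (∀ u v : X,
      (∫⁻ x, g u x * g v x / (∫⁻ y, g y x ∂μ) ∂μ)
        = ∫⁻ x, g v x * g u x / (∫⁻ y, g y x ∂μ) ∂μ) ∧
    (∀ u v : X, 0 < ∫⁻ x, g u x * g v x / (∫⁻ y, g y x ∂μ) ∂μ) ∧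
    (∀ u : X, ∫⁻ v, (∫⁻ x, g u x * g v x / (∫⁻ y, g y x ∂μ) ∂μ) ∂μ = 1) := by
  have hm : Measurable (fun x => ∫⁻ y, g y x ∂μ) := by
    have := hgm.lintegral_prod_left' (μ := μ)
    simpa [Function.uncurry] using this
  have hmr : ∀ u, Measurable (g u) := fun u => hgm.of_uncurry_left
  have hml : ∀ x, Measurable (fun y => g y x) := fun x => hgm.of_uncurry_right
  have hmint : ∀ u v, Measurable (fun x => g u x * g v x / (∫⁻ y, g y x ∂μ)) :=
    fun u v => ((hmr u).mul (hmr v)).div hm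
  have hne : ∀ x, (∫⁻ y, g y x ∂μ) ≠ 0 := by
    intro x h0
    rw [lintegral_eq_zero_iff (hml x)] at h0
    apply hμ0
    rw [← ae_eq_bot, ← Filter.eventually_false_iff_eq_bot]
    filter_upwards [h0] with y hy
    exact (hgpos y x).ne' hy
  refine ⟨fun u v => by simp only [mul_comm], fun u v => ?_, fun u => ?_⟩
  · rw [pos_iff_ne_zero]
    intro h0
    rw [lintegral_eq_zero_iff (hmint u v)] at h0
    apply hμ0
    rw [← ae_eq_bot, ← Filter.eventually_false_iff_eq_bot]
    filter_upwards [h0, hgminus] with x hx hf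
    exact (ENNReal.div_pos (mul_ne_zero (hgpos u x).ne' (hgpos v x).ne') hf.ne).ne' hx
  · rw [lintegral_lintegral_swap]
    · rw [← hg1 u]
      apply lintegral_congr_ae
      filter_upwards [hgminus] with x hf
      have : ∀ v, g u x * g v x / (∫⁻ y, g y x ∂μ) = (g u x / (∫⁻ y, g y x ∂μ)) * g v x := by
        intro v
        simp only [div_eq_mul_inv]
        ring
      simp only [this]
      rw [lintegral_const_mul _ (hml x)]
      exact ENNReal.div_mul_cancel (hne x) hf.ne
    · apply Measurable.aemeasurable
      exact (((hmr u).comp measurable_snd).mul hgm).div (hm.comp measurable_snd)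
end

section
/- Let Ψ be a mass-stationary random measure on ℝ^d with Ψ ≠ 0 almost surely, and let f : M(ℝ^d) × ℝ^d → {0,1} be a measurable function that is translation-covariant in the sense that f(T_tψ, x − t) = f(ψ, x) for all t, x, ψ. Write S_ψ := {x ∈ ℝ^d : f(ψ, x) = 1}. Then: (a) f(Ψ, 0) = 1 almost surely if and only if Ψ(ℝ^d ∖ S_Ψ) = 0 almost surely; and (b) P(f(Ψ, 0) = 1) > 0 if and only if P(Ψ(S_Ψ) > 0) > 0. -/
open MeasureTheory ENNReal

noncomputable section

/-- `ℝ^d`. -/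
abbrev Vec (d : ℕ) := Fin d → ℝ

/-- The shift `T_t ψ`, defined by `(T_t ψ)(A) = ψ(A + t)`. -/
def shiftM {d : ℕ} (t : Vec d) (ψ : Measure (Vec d)) : Measure (Vec d) :=
  ψ.map (fun x => x - t)

/-- A measure is in `M(ℝ^d)` iff it is finite on bounded sets. -/
def BddFinite {d : ℕ} (ψ : Measure (Vec d)) : Prop :=
  ∀ s : Set (Vec d), Bornology.IsBounded s → ψ s < ⊤

/-- Translation covariance of `g : M(ℝ^d) × ℝ^d × ℝ^d → [0,∞]`. -/
def Covariant3 {d : ℕ} (g : Measure (Vec d) → Vec d → Vec d → ℝ≥0∞) : Prop :=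
  ∀ (t x y : Vec d) (ψ : Measure (Vec d)), g (shiftM t ψ) (x - t) (y - t) = g ψ x y

/-- A random measure `Ψ` on a probability space `(Ω, P)` is mass-stationary if the mass
transport principle holds for every translation-covariant measurable `g`. -/
def MassStationary {d : ℕ} {Ω : Type*} [MeasurableSpace Ω] (P : Measure Ω)
    (Ψ : Ω → Measure (Vec d)) : Prop :=
  ∀ g : Measure (Vec d) → Vec d → Vec d → ℝ≥0∞,
    Measurable (fun p : Measure (Vec d) × Vec d × Vec d => g p.1 p.2.1 p.2.2) →
    Covariant3 g →
    ∫⁻ ω, (∫⁻ y, g (Ψ ω) 0 y ∂(Ψ ω)) ∂P = ∫⁻ ω, (∫⁻ y, g (Ψ ω) y 0 ∂(Ψ ω)) ∂P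

theorem aem_aux {d : ℕ} {Ω : Type*} [MeasurableSpace Ω] (P : Measure Ω)
    (Ψ : Ω → Measure (Vec d)) (hΨm : Measurable Ψ)
    (hbf : ∀ᵐ ω ∂P, BddFinite (Ψ ω)) (A : Set (Ω × Vec d)) (hA : MeasurableSet A) :
    AEMeasurable (fun ω => Ψ ω (Prod.mk ω ⁻¹' A)) P := by
  classical
  let B : ℕ → Set (Vec d) := fun n => Metric.closedBall 0 n
  have hB : ∀ n, MeasurableSet (B n) := fun n => Metric.isClosed_closedBall.measurableSet
  have hmono : Monotone B := fun m n h =>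
    Metric.closedBall_subset_closedBall (by exact_mod_cast h)
  have hU : ⋃ n, B n = Set.univ := Metric.iUnion_closedBall_nat 0
  have key : ∀ n, AEMeasurable (fun ω => Ψ ω (Prod.mk ω ⁻¹' A ∩ B n)) P := by
    intro n
    have hs : MeasurableSet {ω | Ψ ω (B n) < ⊤} :=
      measurableSet_lt ((Measure.measurable_coe (hB n)).comp hΨm) measurable_const
    have hres : Measurable (fun ω => (Ψ ω).restrict (B n)) := by
      refine Measure.measurable_of_measurable_coe _ fun s hs' => ?_
      simp only [Measure.restrict_apply hs']
      exact (Measure.measurable_coe (hs'.inter (hB n))).comp hΨm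
    let κ : ProbabilityTheory.Kernel Ω (Vec d) :=
      { toFun := fun ω => if Ψ ω (B n) < ⊤ then (Ψ ω).restrict (B n) else 0
        measurable' := Measurable.ite hs hres
          measurable_const }
    have hκ : ∀ ω, κ ω = if Ψ ω (B n) < ⊤ then (Ψ ω).restrict (B n) else 0 := fun _ => rfl
    have hf : ∀ ω, IsFiniteMeasure (κ ω) := by
      intro ω
      rw [hκ]
      split_ifs with h
      · exact ⟨by simpa using h⟩
      · infer_instance
    refine ⟨fun ω => κ ω (Prod.mk ω ⁻¹' A),
      ProbabilityTheory.Kernel.measurable_kernel_prodMk_left_of_finite hA hf, ?_⟩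
    filter_upwards [hbf] with ω hω
    rw [hκ, if_pos (hω _ Metric.isBounded_closedBall),
      Measure.restrict_apply (measurable_prodMk_left hA)]
  have : (fun ω => Ψ ω (Prod.mk ω ⁻¹' A)) = fun ω => ⨆ n, Ψ ω (Prod.mk ω ⁻¹' A ∩ B n) := by
    funext ω
    rw [← Monotone.measure_iUnion, ← Set.inter_iUnion, hU, Set.inter_univ]
    exact fun m n h => Set.inter_subset_inter_right _ (hmono h)
  rw [this]
  exact AEMeasurable.iSup key

theorem part_a {d : ℕ} {Ω : Type*} [MeasurableSpace Ω] (P : Measure Ω)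
    (Ψ : Ω → Measure (Vec d)) (hΨm : Measurable Ψ)
    (hbf : ∀ᵐ ω ∂P, BddFinite (Ψ ω))
    (hne : ∀ᵐ ω ∂P, Ψ ω ≠ 0)
    (hms : MassStationary P Ψ)
    (f : Measure (Vec d) → Vec d → Bool)
    (hfm : Measurable (fun p : Measure (Vec d) × Vec d => f p.1 p.2))
    (hfcov : ∀ (t x : Vec d) (ψ : Measure (Vec d)), f (shiftM t ψ) (x - t) = f ψ x) :
    (∀ᵐ ω ∂P, f (Ψ ω) 0 = true) ↔ (∀ᵐ ω ∂P, Ψ ω {x | f (Ψ ω) x = true}ᶜ = 0) := by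
  let c : Bool → ℝ≥0∞ := fun b => if b = true then 0 else 1
  have hc : Measurable c := measurable_of_finite c
  have h := hms (fun ψ x _ => c (f ψ x))
    (hc.comp (hfm.comp (measurable_fst.prodMk (measurable_fst.comp measurable_snd))))
    (fun t x y ψ => by simp only [hfcov])
  have hR : ∀ ω, ∫⁻ y, c (f (Ψ ω) y) ∂(Ψ ω) = Ψ ω {x | f (Ψ ω) x = true}ᶜ := by
    intro ω
    have hm : MeasurableSet {x | f (Ψ ω) x = true}ᶜ :=
      ((hfm.comp measurable_prodMk_left) (measurableSet_singleton true)).compl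
    rw [← lintegral_indicator_one hm]
    congr 1
    funext y
    by_cases hy : f (Ψ ω) y = true <;> simp [c, hy]
  simp only [hR, lintegral_const] at h
  have hAE : AEMeasurable (fun ω => Ψ ω {x | f (Ψ ω) x = true}ᶜ) P := by
    have hA : MeasurableSet {p : Ω × Vec d | f (Ψ p.1) p.2 = true}ᶜ :=
      ((hfm.comp ((hΨm.comp measurable_fst).prodMk measurable_snd))
        (measurableSet_singleton true)).compl
    exact aem_aux P Ψ hΨm hbf _ hA
  have hL : AEMeasurable (fun ω => c (f (Ψ ω) 0) * Ψ ω Set.univ) P :=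
    ((hc.comp (hfm.comp (hΨm.prodMk measurable_const))).mul
      ((Measure.measurable_coe MeasurableSet.univ).comp hΨm)).aemeasurable
  have e1 := lintegral_eq_zero_iff' hL
  have e2 := lintegral_eq_zero_iff' hAE
  rw [h, e2] at e1
  refine Iff.trans ?_ e1.symm
  constructor
  · intro h1
    filter_upwards [h1] with ω h1
    simp [c, h1]
  · intro h1
    filter_upwards [h1, hne] with ω h1 h2
    by_contra h3
    simp [c, h3, h2] at h1

/-- "everything happens at the origin".  Let `Ψ` be a mass-stationary random
measure on `ℝ^d` with `Ψ ≠ 0` a.s., and let `f : M(ℝ^d) × ℝ^d → {0,1}` be measurable and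
translation-covariant; write `S_ψ := {x | f ψ x = 1}`.  Then (a) `f Ψ 0 = 1` a.s. iff
`Ψ(S_Ψᶜ) = 0` a.s.; and (b) `P(f Ψ 0 = 1) > 0` iff `P(Ψ(S_Ψ) > 0) > 0`. -/
theorem stmt6 {d : ℕ} {Ω : Type*} [MeasurableSpace Ω] (P : Measure Ω) [IsProbabilityMeasure P]
    (Ψ : Ω → Measure (Vec d)) (hΨm : Measurable Ψ)
    (hbf : ∀ᵐ ω ∂P, BddFinite (Ψ ω))
    (hne : ∀ᵐ ω ∂P, Ψ ω ≠ 0)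
    (hms : MassStationary P Ψ)
    (f : Measure (Vec d) → Vec d → Bool)
    (hfm : Measurable (fun p : Measure (Vec d) × Vec d => f p.1 p.2))
    (hfcov : ∀ (t x : Vec d) (ψ : Measure (Vec d)), f (shiftM t ψ) (x - t) = f ψ x) :
    ((∀ᵐ ω ∂P, f (Ψ ω) 0 = true) ↔ (∀ᵐ ω ∂P, Ψ ω {x | f (Ψ ω) x = true}ᶜ = 0)) ∧
    (0 < P {ω | f (Ψ ω) 0 = true} ↔ 0 < P {ω | 0 < Ψ ω {x | f (Ψ ω) x = true}}) := by
  refine ⟨part_a P Ψ hΨm hbf hne hms f hfm hfcov, ?_⟩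
  have h := part_a P Ψ hΨm hbf hne hms (fun ψ x => !(f ψ x))
    ((measurable_of_finite not).comp hfm) (fun t x ψ => by simp only [hfcov])
  have hs : ∀ ω, {x | (!(f (Ψ ω) x)) = true}ᶜ = {x | f (Ψ ω) x = true} := by
    intro ω
    ext x
    simp
  simp only [hs] at h
  rw [ae_iff, ae_iff] at h
  simp only [pos_iff_ne_zero, ne_eq] at h ⊢
  simpa using not_congr h
end
end

section
/- If Ψ is a mass-stationary random measure on ℝ^d with Ψ ≠ 0 almost surely, then almost surely the origin 0 lies in the (topological) support of Ψ. -/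
open MeasureTheory ENNReal

noncomputable section

theorem ball_null_iff {d : ℕ} (r : ℝ) (ψ : Measure (Vec d)) (x : Vec d) :
    ψ (Metric.ball x r) = 0 ↔ ∀ i k : ℕ,
      dist (TopologicalSpace.denseSeq (Vec d) i) x + 1 / ((k : ℝ) + 1) ≤ r →
      ψ (Metric.ball (TopologicalSpace.denseSeq (Vec d) i) (1 / ((k : ℝ) + 1))) = 0 := by
  constructor
  · intro h i k hik
    refine measure_mono_null (Metric.ball_subset_ball' ?_) h
    linarith
  · intro h
    have hsub : Metric.ball x r ⊆ ⋃ i : ℕ, ⋃ k : ℕ,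
        ⋃ _ : dist (TopologicalSpace.denseSeq (Vec d) i) x + 1 / ((k : ℝ) + 1) ≤ r,
        Metric.ball (TopologicalSpace.denseSeq (Vec d) i) (1 / ((k : ℝ) + 1)) := by
      intro y hy
      rw [Metric.mem_ball] at hy
      obtain ⟨k, hk⟩ := exists_nat_one_div_lt (show 0 < (r - dist y x) / 2 by linarith)
      have hpos : 0 < 1 / ((k : ℝ) + 1) := by positivity
      obtain ⟨i, hi⟩ := (TopologicalSpace.denseRange_denseSeq (Vec d)).exists_dist_lt y hpos
      simp only [Set.mem_iUnion, Metric.mem_ball]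
      refine ⟨i, k, ?_, hi⟩
      have := dist_triangle (TopologicalSpace.denseSeq (Vec d) i) y x
      rw [dist_comm _ y] at this
      linarith
    refine measure_mono_null hsub ?_
    simp only [measure_iUnion_null_iff]
    exact h

theorem measurableSet_ball_null {d : ℕ} (r : ℝ) :
    MeasurableSet {p : Measure (Vec d) × Vec d | p.1 (Metric.ball p.2 r) = 0} := by
  refine MeasurableSet.congr (s := ⋂ i : ℕ, ⋂ k : ℕ, {p : Measure (Vec d) × Vec d |
      dist (TopologicalSpace.denseSeq (Vec d) i) p.2 + 1 / ((k : ℝ) + 1) ≤ r}ᶜ ∪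
      {p | p.1 (Metric.ball (TopologicalSpace.denseSeq (Vec d) i) (1 / ((k : ℝ) + 1))) = 0}) ?_ ?_
  · refine MeasurableSet.iInter fun i => MeasurableSet.iInter fun k => ?_
    refine MeasurableSet.union (MeasurableSet.compl ?_) ?_
    · refine measurableSet_le ?_ measurable_const
      exact (measurable_const.dist measurable_snd).add measurable_const
    · exact ((Measure.measurable_coe Metric.isOpen_ball.measurableSet).comp measurable_fst)
        (measurableSet_singleton 0)
  · ext p
    have := ball_null_iff r p.1 p.2
    simp only [imp_iff_not_or] at this
    simp only [Set.mem_iInter, Set.mem_union, Set.mem_compl_iff, Set.mem_ofPred_eq]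
    exact this.symm

theorem null_ball_null {d : ℕ} (r : ℝ) (hr : 0 < r) (ψ : Measure (Vec d)) :
    ψ {y | ψ (Metric.ball y r) = 0} = 0 := by
  refine measure_null_of_locally_null _ fun y hy => ?_
  exact ⟨Metric.ball y r, mem_nhdsWithin_of_mem_nhds (Metric.ball_mem_nhds y hr), hy⟩

theorem shift_ball {d : ℕ} (t x : Vec d) (r : ℝ) (ψ : Measure (Vec d)) :
    shiftM t ψ (Metric.ball (x - t) r) = ψ (Metric.ball x r) := by
  unfold shiftM
  rw [Measure.map_apply (by fun_prop) Metric.isOpen_ball.measurableSet]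
  congr 1
  ext y
  simp [Metric.mem_ball]

theorem ae_ball_pos {d : ℕ} {Ω : Type*} [MeasurableSpace Ω] (P : Measure Ω)
    (Ψ : Ω → Measure (Vec d)) (hΨm : Measurable Ψ)
    (hne : ∀ᵐ ω ∂P, Ψ ω ≠ 0)
    (hms : MassStationary P Ψ) (r : ℝ) (hr : 0 < r) :
    ∀ᵐ ω ∂P, Ψ ω (Metric.ball 0 r) ≠ 0 := by
  classical
  have hS := measurableSet_ball_null (d := d) r
  set S := {p : Measure (Vec d) × Vec d | p.1 (Metric.ball p.2 r) = 0} with hSdef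
  have hf : Measurable (S.indicator (fun _ => (1 : ℝ≥0∞))) := measurable_const.indicator hS
  have key := hms (fun ψ x _ => S.indicator (fun _ => (1 : ℝ≥0∞)) (ψ, x))
    (hf.comp (measurable_fst.prodMk (measurable_fst.comp measurable_snd)))
    (by
      intro t x y ψ
      simp only [Set.indicator_apply, hSdef, Set.mem_ofPred_eq, shift_ball])
  have hR : ∀ ω, ∫⁻ y, S.indicator (fun _ => (1 : ℝ≥0∞)) (Ψ ω, y) ∂(Ψ ω) = 0 := by
    intro ω
    refine (lintegral_eq_zero_iff (hf.comp measurable_prodMk_left)).2 ?_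
    have h0 := null_ball_null r hr (Ψ ω)
    rw [measure_eq_zero_iff_ae_notMem] at h0
    filter_upwards [h0] with y hy
    have hy2 : (Ψ ω, y) ∉ S := hy
    exact Set.indicator_of_notMem hy2 (fun _ => (1 : ℝ≥0∞))
  simp only [hR, lintegral_const, mul_zero, lintegral_zero, zero_mul] at key
  rw [lintegral_eq_zero_iff] at key
  · filter_upwards [key, hne] with ω h1 h2 h3
    have hmem : (Ψ ω, (0 : Vec d)) ∈ S := h3
    rw [Set.indicator_of_mem hmem] at h1
    simp at h1
    exact h2 h1
  · exact (hf.comp (hΨm.prodMk measurable_const)).mul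
      ((Measure.measurable_coe MeasurableSet.univ).comp hΨm)

/-- If `Ψ` is a mass-stationary random measure on `ℝ^d` with `Ψ ≠ 0` a.s.,
then almost surely the origin lies in the topological support of `Ψ`, i.e. every open
neighborhood of `0` has positive `Ψ`-measure. -/
theorem stmt7 {d : ℕ} {Ω : Type*} [MeasurableSpace Ω] (P : Measure Ω) [IsProbabilityMeasure P]
    (Ψ : Ω → Measure (Vec d)) (hΨm : Measurable Ψ)
    (hbf : ∀ᵐ ω ∂P, BddFinite (Ψ ω))
    (hne : ∀ᵐ ω ∂P, Ψ ω ≠ 0)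
    (hms : MassStationary P Ψ) :
    ∀ᵐ ω ∂P, ∀ U : Set (Vec d), IsOpen U → (0 : Vec d) ∈ U → 0 < Ψ ω U := by
  have h : ∀ᵐ ω ∂P, ∀ n : ℕ, Ψ ω (Metric.ball 0 (1 / ((n : ℝ) + 1))) ≠ 0 :=
    ae_all_iff.2 fun n => ae_ball_pos P Ψ hΨm hne hms _ (by positivity)
  filter_upwards [h] with ω hω U hU h0
  obtain ⟨ε, hε, hsub⟩ := Metric.isOpen_iff.1 hU 0 h0
  obtain ⟨n, hn⟩ := exists_nat_one_div_lt hε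
  exact lt_of_lt_of_le (pos_iff_ne_zero.2 (hω n))
    (measure_mono ((Metric.ball_subset_ball hn.le).trans hsub))
end
end

section
/- Let Ψ be a mass-stationary random measure on ℝ^d with Ψ(ℝ^d) = ∞ almost surely, and let f : M(ℝ^d) × ℝ^d → {0,1} be a measurable function that is translation-covariant in the sense that f(T_tψ, x − t) = f(ψ, x) for all t, x, ψ; write S_ψ := {x ∈ ℝ^d : f(ψ, x) = 1}. Then almost surely the set S_Ψ is either empty or unbounded, and almost surely Ψ(S_Ψ) ∈ {0, ∞}. -/
open MeasureTheory ENNReal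

noncomputable section

lemma aux_capacity {Y : Type*} [TopologicalSpace Y] [T2Space Y] [MeasurableSpace Y]
    [BorelSpace Y] (μ : Measure Y) [IsFiniteMeasure μ] (f : (ℕ → ℕ) → Y) (hf : Continuous f)
    (c : ℝ≥0∞) (hc : c < μ (Set.range f)) :
    ∃ t, MeasurableSet t ∧ t ⊆ Set.range f ∧ c ≤ μ t := by
  have step : ∀ (k : ℕ) (D : {D : Set (ℕ → ℕ) // c < μ (f '' D)}),
      ∃ n : ℕ, c < μ (f '' (D.1 ∩ {x | x k ≤ n})) := by
    intro k D
    have h1 : f '' D.1 = ⋃ n : ℕ, f '' (D.1 ∩ {x | x k ≤ n}) := by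
      rw [← Set.image_iUnion, ← Set.inter_iUnion]
      congr 1
      ext x
      simp only [Set.mem_inter_iff, Set.mem_iUnion, Set.mem_ofPred_eq]
      exact ⟨fun h => ⟨h, _, le_rfl⟩, fun h => h.1⟩
    have hmono : Monotone (fun n : ℕ => f '' (D.1 ∩ {x | x k ≤ n})) := by
      intro a b hab
      apply Set.image_mono
      exact Set.inter_subset_inter_right _ fun x hx => le_trans hx hab
    have h2 := D.2
    rw [h1, hmono.measure_iUnion] at h2
    exact lt_iSup_iff.1 h2
  choose n hn using step
  let D : ℕ → {D : Set (ℕ → ℕ) // c < μ (f '' D)} := fun k =>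
    Nat.rec (motive := fun _ => {D : Set (ℕ → ℕ) // c < μ (f '' D)})
      ⟨Set.univ, by simpa using hc⟩ (fun k D => ⟨D.1 ∩ {x | x k ≤ n k D}, hn k D⟩) k
  let b : ℕ → ℕ := fun k => n k (D k)
  have hDs : ∀ k, (D (k+1)).1 = (D k).1 ∩ {x | x k ≤ b k} := fun k => rfl
  have hanti : Antitone (fun k => (D k).1) := antitone_nat_of_succ_le fun k => by
    rw [hDs]; exact Set.inter_subset_left
  have hDb : ∀ k, ∀ x ∈ (D k).1, ∀ i < k, x i ≤ b i := by
    intro k x hx i hi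
    have : x ∈ (D (i+1)).1 := hanti (Nat.succ_le_of_lt hi) hx
    rw [hDs] at this
    exact this.2
  let K : Set (ℕ → ℕ) := Set.pi Set.univ fun i => Set.Iic (b i)
  have hK : IsCompact K := isCompact_univ_pi fun i => (Set.finite_Iic (b i)).isCompact
  have hsub : (⋂ k, closure (f '' (D k).1)) ⊆ f '' K := by
    intro y hy
    by_contra hyK
    obtain ⟨U, V, hU, hV, hKU, hyV, hUV⟩ :=
      (hK.image hf).separation_of_notMem hyK
    have : ∃ k, (D k).1 ⊆ f ⁻¹' U := by
      by_contra! hcon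
      have : ∀ k, ∃ x ∈ (D k).1, f x ∉ U := by
        intro k
        obtain ⟨x, hx, hx'⟩ := Set.not_subset.1 (hcon k)
        exact ⟨x, hx, hx'⟩
      choose x hx hxU using this
      obtain ⟨z, hz, φ, hφ, hlim⟩ := hK.tendsto_subseq (x := fun k i => min (x k i) (b i))
        (fun k i _ => Set.mem_Iic.2 (min_le_right _ _))
      have hlim2 : Filter.Tendsto (x ∘ φ) Filter.atTop (nhds z) := by
        rw [tendsto_pi_nhds] at hlim ⊢
        intro i
        refine (hlim i).congr' ?_
        filter_upwards [Filter.eventually_gt_atTop i] with k hk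
        have : i < φ k := lt_of_lt_of_le hk (hφ.id_le k)
        simp [hDb _ _ (hx (φ k)) i this]
      have h3 := (hf.tendsto z).comp hlim2
      have h4 := h3.eventually (hU.mem_nhds (hKU ⟨z, hz, rfl⟩))
      obtain ⟨k, hk⟩ := h4.exists
      exact hxU _ hk
    obtain ⟨k, hk⟩ := this
    have hyc := Set.mem_iInter.1 hy k
    rw [mem_closure_iff] at hyc
    obtain ⟨w, hwV, hwD⟩ := hyc V hV hyV
    have : w ∈ U := (Set.image_subset_iff.2 hk) hwD
    exact Set.disjoint_left.1 hUV this hwV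
  refine ⟨⋂ k, closure (f '' (D k).1), (isClosed_iInter fun _ => isClosed_closure).measurableSet,
    hsub.trans (Set.image_subset_range _ _), ?_⟩
  have hanti2 : Antitone (fun k => closure (f '' (D k).1)) := fun i j hij =>
    closure_mono (Set.image_mono (hanti hij))
  rw [hanti2.measure_iInter (fun i => isClosed_closure.measurableSet.nullMeasurableSet)
    ⟨0, measure_ne_top _ _⟩]
  exact le_iInf fun k => (D k).2.le.trans (measure_mono subset_closure)

lemma aux_analytic_null {Y : Type*} [TopologicalSpace Y] [T2Space Y] [MeasurableSpace Y]
    [BorelSpace Y] (μ : Measure Y) [IsFiniteMeasure μ] (s : Set Y) (hs : AnalyticSet s) :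
    NullMeasurableSet s μ := by
  rw [AnalyticSet] at hs
  rcases hs with rfl | ⟨f, hf, rfl⟩
  · exact MeasurableSet.empty.nullMeasurableSet
  rcases eq_or_ne (μ (Set.range f)) 0 with h0 | h0
  · exact NullMeasurableSet.of_null h0
  obtain ⟨u, -, hu, hulim⟩ := exists_seq_strictMono_tendsto' (pos_iff_ne_zero.2 h0)
  choose t htm hts hct using fun n => aux_capacity μ f hf (u n) (hu n).2
  have hle : μ (Set.range f) ≤ μ (⋃ n, t n) :=
    le_of_tendsto' hulim fun n => (hct n).trans (measure_mono (Set.subset_iUnion t n))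
  have hsub : (⋃ n, t n) ⊆ Set.range f := Set.iUnion_subset hts
  have hm : MeasurableSet (⋃ n, t n) := MeasurableSet.iUnion htm
  have := ae_eq_of_subset_of_measure_ge (hsub.trans (subset_toMeasurable μ _))
    ((measure_toMeasurable (μ := μ) (Set.range f)).le.trans hle) hm.nullMeasurableSet
    (measure_ne_top _ _)
  refine ⟨⋃ n, t n, hm, ?_⟩
  refine Filter.EventuallyLE.antisymm ?_ hsub.eventuallyLE
  exact (LE.le.eventuallyLE (subset_toMeasurable μ (Set.range f))).trans this.symm.le

lemma aux_factor {α β : Type*} [MeasurableSpace α] [MeasurableSpace β] (A : Set (α × β))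
    (hA : MeasurableSet A) : ∃ (e : α → (ℕ → Bool)) (A' : Set ((ℕ → Bool) × β)),
      Measurable e ∧ MeasurableSet A' ∧ A = (fun p => (e p.1, p.2)) ⁻¹' A' := by
  rw [← generateFrom_prod] at hA
  induction A, hA using MeasurableSpace.generateFrom_induction with
  | hC t ht _ =>
    obtain ⟨s, hs, u, hu, rfl⟩ := ht
    classical
    refine ⟨fun a _ => decide (a ∈ s), {p | p.1 0 = true ∧ p.2 ∈ u}, ?_, ?_, ?_⟩
    · refine measurable_pi_lambda _ fun _ => ?_
      refine measurable_to_bool ?_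
      convert! (show MeasurableSet s from hs) using 1
      ext; simp
    · refine MeasurableSet.inter ?_ (measurable_snd hu)
      have hm : Measurable (fun p : (ℕ → Bool) × β => p.1 0) :=
        (measurable_pi_apply 0).comp measurable_fst
      exact hm (measurableSet_singleton true)
    · ext p; simp
  | empty => exact ⟨fun _ _ => true, ∅, measurable_const, MeasurableSet.empty, by simp⟩
  | compl t _ ih =>
    obtain ⟨e, A', he, hA', rfl⟩ := ih
    exact ⟨e, A'ᶜ, he, hA'.compl, rfl⟩
  | iUnion s _ ih =>
    choose e A' he hA' h using ih
    refine ⟨fun a k => e k.unpair.1 a k.unpair.2,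
      ⋃ n, (fun p : (ℕ → Bool) × β => ((fun m => p.1 (Nat.pair n m) : ℕ → Bool), p.2)) ⁻¹' A' n,
      ?_, ?_, ?_⟩
    · exact measurable_pi_lambda _ fun k => (measurable_pi_apply _).comp (he _)
    · refine MeasurableSet.iUnion fun n => ?_
      refine Measurable.prodMk ?_ measurable_snd (hA' n)
      exact measurable_pi_lambda _ fun k => (measurable_pi_apply _).comp measurable_fst
    · ext p
      simp only [Set.mem_iUnion, Set.mem_preimage, Nat.unpair_pair]
      refine exists_congr fun n => ?_
      rw [h n]; rfl

lemma aux_proj {α β : Type*} [MeasurableSpace α] [TopologicalSpace β] [PolishSpace β]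
    [MeasurableSpace β] [BorelSpace β] (A : Set (α × β))
    (hA : MeasurableSet A) (μ : Measure α) [SFinite μ] :
    NullMeasurableSet {a | ∃ b, (a, b) ∈ A} μ := by
  obtain ⟨ν, hν, hμν, -⟩ := exists_isFiniteMeasure_absolutelyContinuous μ
  refine NullMeasurableSet.mono_ac ?_ hμν
  obtain ⟨e, A', he, hA', rfl⟩ := aux_factor A hA
  have hc1 : ∀ i : ℕ, TopologicalSpace.IsCompletelyMetrizableSpace ((fun _ => Bool) i) :=
    fun _ => inferInstance
  have hc2 : TopologicalSpace.IsCompletelyMetrizableSpace (ℕ → Bool) :=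
    TopologicalSpace.IsCompletelyMetrizableSpace.pi_countable
  have hc3 : PolishSpace (ℕ → Bool) := inferInstance
  have h1 : AnalyticSet (Prod.fst '' A') := hA'.analyticSet.image_of_continuous continuous_fst
  have h2 := aux_analytic_null (ν.map e) _ h1
  have h3 := h2.preimage (he.quasiMeasurePreserving (μ := ν))
  convert! h3 using 1
  ext a
  simp


open ProbabilityTheory

lemma aux_bf_iff {d : ℕ} (ψ : Measure (Vec d)) :
    BddFinite ψ ↔ ∀ n : ℕ, ψ (Metric.closedBall 0 n) < ⊤ := by
  constructor
  · intro h n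
    exact h _ Metric.isBounded_closedBall
  · intro h s hs
    obtain ⟨r, hr⟩ := hs.subset_closedBall 0
    obtain ⟨n, hn⟩ := exists_nat_ge r
    exact (measure_mono (hr.trans (Metric.closedBall_subset_closedBall hn))).trans_lt (h n)

lemma aux_bf_meas {d : ℕ} : MeasurableSet {ψ : Measure (Vec d) | BddFinite ψ} := by
  simp_rw [aux_bf_iff]
  have : {ψ : Measure (Vec d) | ∀ n : ℕ, ψ (Metric.closedBall 0 n) < ⊤}
      = ⋂ n : ℕ, (fun ψ : Measure (Vec d) => ψ (Metric.closedBall 0 n)) ⁻¹' Set.Iio ⊤ := by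
    ext; simp
  rw [this]
  exact MeasurableSet.iInter fun n =>
    (Measure.measurable_coe Metric.isClosed_closedBall.measurableSet) measurableSet_Iio

open Classical in
/-- The identity kernel on locally finite measures. -/
def auxK (d : ℕ) : Kernel (Measure (Vec d)) (Vec d) :=
  Kernel.piecewise (aux_bf_meas (d := d)) ⟨id, measurable_id⟩ 0

lemma auxK_of {d : ℕ} {ψ : Measure (Vec d)} (h : BddFinite ψ) : auxK d ψ = ψ := by
  simp only [auxK, Kernel.piecewise_apply]
  exact if_pos h

lemma auxK_not {d : ℕ} {ψ : Measure (Vec d)} (h : ¬ BddFinite ψ) : auxK d ψ = 0 := by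
  simp only [auxK, Kernel.piecewise_apply]
  exact if_neg h

lemma aux_shell_meas (d n : ℕ) : MeasurableSet {x : Vec d | ⌊‖x‖⌋₊ = n} :=
  (Nat.measurable_floor.comp measurable_norm) (measurableSet_singleton n)

lemma aux_shell_bdd (d n : ℕ) : Bornology.IsBounded {x : Vec d | ⌊‖x‖⌋₊ = n} := by
  refine Metric.isBounded_closedBall (x := (0 : Vec d)) (r := n + 1) |>.subset ?_
  rintro x rfl
  simpa using (Nat.lt_floor_add_one ‖x‖).le

lemma aux_level_meas (d n k : ℕ) : MeasurableSet {ψ : Measure (Vec d) | BddFinite ψ ∧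
    ⌊(ψ {x : Vec d | ⌊‖x‖⌋₊ = n}).toReal⌋₊ = k} := by
  refine aux_bf_meas.inter ?_
  have hm : Measurable (fun ψ : Measure (Vec d) => ⌊(ψ {x : Vec d | ⌊‖x‖⌋₊ = n}).toReal⌋₊) :=
    Nat.measurable_floor.comp (Measure.measurable_coe (aux_shell_meas d n)).ennreal_toReal
  exact hm (measurableSet_singleton k)

open Classical in
/-- Finite pieces of `auxK`. -/
def auxKp (d : ℕ) (p : ℕ × ℕ) : Kernel (Measure (Vec d)) (Vec d) :=
  Kernel.piecewise (aux_level_meas d p.1 p.2)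
    (Kernel.restrict ⟨id, measurable_id⟩ (aux_shell_meas d p.1)) 0

instance auxKp_fin (d : ℕ) (p : ℕ × ℕ) : IsFiniteKernel (auxKp d p) := by
  refine ⟨⟨(p.2 : ℝ≥0∞) + 1, by simp [ENNReal.add_lt_top], fun ψ => ?_⟩⟩
  simp only [auxKp, Kernel.piecewise_apply]
  split_ifs with h
  · obtain ⟨h1, h2⟩ := h
    rw [Kernel.restrict_apply]
    change (ψ.restrict _) Set.univ ≤ _
    rw [Measure.restrict_apply_univ]
    have hlt := h1 _ (aux_shell_bdd d p.1)
    rw [← ENNReal.ofReal_toReal hlt.ne]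
    have := (Nat.lt_floor_add_one (ψ {x : Vec d | ⌊‖x‖⌋₊ = p.1}).toReal).le
    rw [h2] at this
    refine (ENNReal.ofReal_le_ofReal this).trans ?_
    rw [ENNReal.ofReal_add (by positivity) (by norm_num)]
    simp
  · simp

instance auxK_sfin (d : ℕ) : IsSFiniteKernel (auxK d) := by
  have : auxK d = Kernel.sum (auxKp d) := by
    ext ψ t ht
    rw [Kernel.sum_apply' _ _ ht]
    by_cases h : BddFinite ψ
    · rw [auxK_of h, ENNReal.tsum_prod (f := fun n k => auxKp d (n, k) ψ t)]
      have h1 : ∀ n k, auxKp d (n, k) ψ t =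
          if k = ⌊(ψ {x : Vec d | ⌊‖x‖⌋₊ = n}).toReal⌋₊ then ψ (t ∩ {x : Vec d | ⌊‖x‖⌋₊ = n})
            else 0 := by
        intro n k
        simp only [auxKp, Kernel.piecewise_apply, Set.mem_ofPred_eq, h, true_and]
        by_cases hk : ⌊(ψ {x : Vec d | ⌊‖x‖⌋₊ = n}).toReal⌋₊ = k
        · rw [if_pos hk, if_pos hk.symm, Kernel.restrict_apply' _ _ _ ht]
          rfl
        · rw [if_neg hk, if_neg (Ne.symm hk)]
          rfl
      simp_rw [h1, tsum_ite_eq]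
      rw [← measure_iUnion]
      · congr 1
        ext x; simp
      · intro i j hij
        refine Set.disjoint_left.2 ?_
        rintro x ⟨-, hx⟩ ⟨-, hx'⟩
        exact hij (hx.symm.trans hx')
      · intro n
        exact ht.inter (aux_shell_meas d n)
    · rw [auxK_not h]
      have : ∀ p, auxKp d p ψ t = 0 := by
        intro p
        simp only [auxKp, Kernel.piecewise_apply, Set.mem_ofPred_eq, h, false_and, if_false]
        rfl
      simp [this]
  rw [this]
  infer_instance

lemma aux_sub_meas {d : ℕ} (t : Vec d) : Measurable (fun x : Vec d => x - t) :=
  measurable_id.sub_const t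

lemma aux_shift_apply {d : ℕ} (t : Vec d) (ψ : Measure (Vec d)) {s : Set (Vec d)}
    (hs : MeasurableSet s) : shiftM t ψ s = ψ ((fun x => x - t) ⁻¹' s) :=
  Measure.map_apply (measurable_id.sub_const t) hs

lemma aux_shift_shift {d : ℕ} (s t : Vec d) (ψ : Measure (Vec d)) :
    shiftM s (shiftM t ψ) = shiftM (s + t) ψ := by
  unfold shiftM
  rw [Measure.map_map (aux_sub_meas s) (aux_sub_meas t)]
  congr 1
  ext x i
  simp
  ring

lemma aux_shift_zero {d : ℕ} (ψ : Measure (Vec d)) : shiftM 0 ψ = ψ := by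
  unfold shiftM
  simp

lemma aux_shift_bf {d : ℕ} (t : Vec d) {ψ : Measure (Vec d)} (h : BddFinite ψ) :
    BddFinite (shiftM t ψ) := by
  rw [aux_bf_iff]
  intro n
  rw [aux_shift_apply _ _ Metric.isClosed_closedBall.measurableSet]
  refine h _ ?_
  refine (Metric.isBounded_closedBall (x := t) (r := n)).subset ?_
  intro x hx
  simpa [dist_eq_norm] using hx

lemma aux_shift_bf_iff {d : ℕ} (t : Vec d) {ψ : Measure (Vec d)} :
    BddFinite (shiftM t ψ) ↔ BddFinite ψ := by
  refine ⟨fun h => ?_, aux_shift_bf t⟩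
  have := aux_shift_bf (-t) h
  rwa [aux_shift_shift, neg_add_cancel, aux_shift_zero] at this

lemma aux_shift_meas {d : ℕ} :
    Measurable (fun p : Measure (Vec d) × Vec d => shiftM p.2 (auxK d p.1)) := by
  refine Measure.measurable_of_measurable_coe _ fun s hs => ?_
  have h1 : ∀ p : Measure (Vec d) × Vec d, shiftM p.2 (auxK d p.1) s =
      ∫⁻ x, s.indicator 1 (x - p.2) ∂(auxK d p.1) := by
    intro p
    rw [aux_shift_apply _ _ hs, ← lintegral_indicator_one
      (aux_sub_meas p.2 hs)]
    rfl
  simp_rw [h1]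
  have h2 : Measurable (fun q : (Measure (Vec d) × Vec d) × Vec d =>
      s.indicator (1 : Vec d → ℝ≥0∞) (q.2 - q.1.2)) :=
    (measurable_one.indicator hs).comp
      (measurable_snd.sub (measurable_snd.comp measurable_fst))
  exact Measurable.lintegral_kernel_prod_right' (κ := (auxK d).comap Prod.fst measurable_fst) h2

/-- The transport involution. -/
def auxS (d : ℕ) (p : Measure (Vec d) × Vec d) : Measure (Vec d) × Vec d :=
  (shiftM p.2 (auxK d p.1), -p.2)

lemma auxS_meas (d : ℕ) : Measurable (auxS d) :=
  aux_shift_meas.prodMk measurable_snd.neg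

lemma aux_mp {d : ℕ} {Ω : Type*} [MeasurableSpace Ω] (P : Measure Ω) [IsProbabilityMeasure P]
    (Ψ : Ω → Measure (Vec d)) (hΨm : Measurable Ψ)
    (hbf : ∀ᵐ ω ∂P, BddFinite (Ψ ω))
    (hms : MassStationary P Ψ) :
    MeasurePreserving (auxS d) ((P.map Ψ) ⊗ₘ auxK d) ((P.map Ψ) ⊗ₘ auxK d) := by
  classical
  have : IsProbabilityMeasure (P.map Ψ) := Measure.isProbabilityMeasure_map hΨm.aemeasurable
  refine ⟨auxS_meas d, ?_⟩
  symm
  refine Measure.ext_of_lintegral _ fun h hh => ?_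
  have hhS : Measurable (fun p => h (auxS d p)) := hh.comp (auxS_meas d)
  rw [lintegral_map hh (auxS_meas d), Measure.lintegral_compProd hh,
    Measure.lintegral_compProd hhS,
    lintegral_map (Measurable.lintegral_kernel_prod_right' hh) hΨm,
    lintegral_map (Measurable.lintegral_kernel_prod_right' hhS) hΨm]
  let g : Measure (Vec d) → Vec d → Vec d → ℝ≥0∞ := fun ψ x y =>
    if BddFinite ψ then h (shiftM x (auxK d ψ), y - x) else 0
  have hg := hms g ?_ ?_
  · convert hg using 1
    · refine lintegral_congr_ae ?_
      filter_upwards [hbf] with ω hω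
      simp [g, hω, auxK_of hω, aux_shift_zero]
    · refine lintegral_congr_ae ?_
      filter_upwards [hbf] with ω hω
      simp [g, hω, auxK_of hω, auxS]
  · refine Measurable.ite (measurable_fst aux_bf_meas) (hh.comp ?_) measurable_const
    refine Measurable.prodMk ?_ ?_
    · exact aux_shift_meas.comp (measurable_fst.prodMk (measurable_fst.comp measurable_snd))
    · exact (measurable_snd.comp measurable_snd).sub (measurable_fst.comp measurable_snd)
  · intro t x y ψ
    simp only [g, aux_shift_bf_iff]
    by_cases hψ : BddFinite ψ
    · rw [if_pos hψ, if_pos hψ, auxK_of hψ, auxK_of (aux_shift_bf t hψ), aux_shift_shift]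
      simp
    · rw [if_neg hψ, if_neg hψ]

lemma aux_core {d : ℕ} (Q : Measure (Measure (Vec d))) [IsProbabilityMeasure Q]
    (hbf : ∀ᵐ ψ ∂Q, BddFinite ψ) (hinf : ∀ᵐ ψ ∂Q, ψ Set.univ = ⊤)
    (hs : MeasurePreserving (auxS d) (Q ⊗ₘ auxK d) (Q ⊗ₘ auxK d))
    (A : Set (Measure (Vec d) × Vec d)) (hA : NullMeasurableSet A (Q ⊗ₘ auxK d))
    (hA0 : NullMeasurableSet {ψ | (ψ, (0 : Vec d)) ∈ A} Q)
    (hcov : ∀ (ψ : Measure (Vec d)) (t x : Vec d), (shiftM t ψ, x - t) ∈ A ↔ (ψ, x) ∈ A) :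
    ∀ᵐ ψ ∂Q, ψ {x | (ψ, x) ∈ A} = 0 ∨ ψ {x | (ψ, x) ∈ A} = ⊤ := by
  classical
  -- sections are a.e. null measurable
  obtain ⟨A', hA'm, hAA'⟩ := hA
  have hsec : ∀ᵐ ψ ∂Q, ∀ᵐ x ∂(auxK d ψ), ((ψ, x) ∈ A ↔ (ψ, x) ∈ A') := by
    refine Measure.ae_ae_of_ae_compProd (p := fun p => (p ∈ A ↔ p ∈ A')) ?_
    filter_upwards [hAA'] with p hp
    exact iff_of_eq hp
  let m : Measure (Vec d) → ℝ≥0∞ := fun ψ => ψ {x | (ψ, x) ∈ A}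
  let m' : Measure (Vec d) → ℝ≥0∞ := fun ψ => auxK d ψ (Prod.mk ψ ⁻¹' A')
  have hm' : Measurable m' := Kernel.measurable_kernel_prodMk_left hA'm
  have hmm : m =ᵐ[Q] m' := by
    filter_upwards [hsec, hbf] with ψ h1 h2
    simp only [m, m']
    rw [auxK_of h2] at h1 ⊢
    exact measure_congr (h1.mono fun x hx => propext hx)
  let v : ℝ≥0∞ → ℝ≥0∞ := fun a => if a = 0 ∨ a = ⊤ then 0 else a⁻¹
  have hv : Measurable v := Measurable.ite
    ((measurableSet_singleton 0).union (measurableSet_singleton ⊤)) measurable_const measurable_inv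
  have hvm : ∀ a, v a * a = if a = 0 ∨ a = ⊤ then 0 else 1 := by
    intro a
    simp only [v]
    split_ifs with h
    · simp
    · push Not at h
      exact ENNReal.inv_mul_cancel h.1 h.2
  -- h' measurable version
  let h' : Measure (Vec d) × Vec d → ℝ≥0∞ := fun p => v (m' p.1) * A'.indicator 1 p
  have hh' : Measurable h' := (hv.comp (hm'.comp measurable_fst)).mul
    (measurable_one.indicator hA'm)
  have hae : ∀ {p q : Measure (Vec d) → ℝ≥0∞}, p =ᵐ[Q] q →
      (fun z : Measure (Vec d) × Vec d => p z.1) =ᵐ[Q ⊗ₘ auxK d] fun z => q z.1 := by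
    intro p q hpq
    obtain ⟨N, hN, hNm, hN0⟩ := exists_measurable_superset_of_null hpq
    have : ∀ᵐ z ∂(Q ⊗ₘ auxK d), z.1 ∈ Nᶜ :=
      Measure.ae_compProd_of_ae_fst (auxK d) (p := fun x => x ∈ Nᶜ) hNm.compl
        (measure_eq_zero_iff_ae_notMem.1 hN0)
    filter_upwards [this] with z hz
    by_contra hne
    exact hz (hN hne)
  let h : Measure (Vec d) × Vec d → ℝ≥0∞ := fun p => v (m p.1) * A.indicator 1 p
  have hhh : h =ᵐ[Q ⊗ₘ auxK d] h' := by
    filter_upwards [hAA', hae hmm] with p h1 h2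
    have h1' : p ∈ A ↔ p ∈ A' := iff_of_eq h1
    simp only [h, h', h2, Set.indicator, h1']
  have I1 : ∫⁻ p, h p ∂(Q ⊗ₘ auxK d) = ∫⁻ ψ, v (m' ψ) * m' ψ ∂Q := by
    rw [lintegral_congr_ae hhh, Measure.lintegral_compProd hh']
    refine lintegral_congr fun ψ => ?_
    simp only [h']
    rw [lintegral_const_mul]
    · congr 1
      exact lintegral_indicator_one (μ := auxK d ψ) (s := Prod.mk ψ ⁻¹' A')
        (measurable_prodMk_left hA'm)
    · exact (measurable_one.indicator hA'm).comp measurable_prodMk_left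
  have I1le : ∫⁻ p, h p ∂(Q ⊗ₘ auxK d) ≤ 1 := by
    rw [I1]
    calc ∫⁻ ψ, v (m' ψ) * m' ψ ∂Q ≤ ∫⁻ ψ, 1 ∂Q := by
          refine lintegral_mono fun ψ => ?_
          simp only [hvm]
          split_ifs <;> simp
      _ = 1 := by simp
  obtain ⟨B, hBm, hB⟩ := hA0
  let u : Measure (Vec d) → ℝ≥0∞ := fun ψ => v (m' ψ) * B.indicator 1 ψ
  have hu : Measurable u := (hv.comp hm').mul (measurable_one.indicator hBm)
  let u0 : Measure (Vec d) → ℝ≥0∞ := fun ψ =>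
    v (m ψ) * {ψ | (ψ, (0 : Vec d)) ∈ A}.indicator 1 ψ
  have huu : u0 =ᵐ[Q] u := by
    filter_upwards [hmm, hB] with ψ h1 h2
    have h2' : (ψ, (0 : Vec d)) ∈ A ↔ ψ ∈ B := iff_of_eq h2
    simp only [u0, u, h1, Set.indicator, Set.mem_ofPred_eq, h2']
  have hcomp : (fun p => h (auxS d p)) =ᵐ[Q ⊗ₘ auxK d] fun p => u p.1 := by
    have hb2 : ∀ᵐ z ∂(Q ⊗ₘ auxK d), BddFinite z.1 :=
      Measure.ae_compProd_of_ae_fst (auxK d) aux_bf_meas hbf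
    filter_upwards [hae huu, hb2] with p h1 h2
    rw [← h1]
    have e1 : ∀ x : Vec d, (shiftM p.2 p.1, x) ∈ A ↔ (p.1, x + p.2) ∈ A := by
      intro x
      have := hcov p.1 p.2 (x + p.2)
      rwa [add_sub_cancel_right] at this
    have e2 : m (shiftM p.2 p.1) = m p.1 := by
      simp only [m, e1]
      unfold shiftM
      rw [show (fun x : Vec d => x - p.2) = MeasurableEquiv.subRight p.2 from rfl,
        MeasurableEquiv.map_apply]
      congr 1
      ext x
      change (p.1, (x - p.2) + p.2) ∈ A ↔ _
      rw [sub_add_cancel]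
      rfl
    simp only [h, u0, auxS, auxK_of h2, e2, Set.indicator, e1, Set.mem_ofPred_eq, neg_add_cancel,
      Pi.one_apply]
  have I2 : ∫⁻ p, h p ∂(Q ⊗ₘ auxK d) = ∫⁻ ψ, u ψ * ⊤ ∂Q := by
    calc ∫⁻ p, h p ∂(Q ⊗ₘ auxK d) = ∫⁻ p, h' p ∂(Q ⊗ₘ auxK d) := lintegral_congr_ae hhh
      _ = ∫⁻ p, h' (auxS d p) ∂(Q ⊗ₘ auxK d) := (hs.lintegral_comp hh').symm
      _ = ∫⁻ p, h (auxS d p) ∂(Q ⊗ₘ auxK d) :=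
          lintegral_congr_ae (hs.quasiMeasurePreserving.ae_eq_comp hhh).symm
      _ = ∫⁻ p, u p.1 ∂(Q ⊗ₘ auxK d) := lintegral_congr_ae hcomp
      _ = ∫⁻ ψ, ∫⁻ _, u ψ ∂(auxK d ψ) ∂Q :=
          Measure.lintegral_compProd (hu.comp measurable_fst)
      _ = ∫⁻ ψ, u ψ * ⊤ ∂Q := by
          refine lintegral_congr_ae ?_
          filter_upwards [hbf, hinf] with ψ h1 h2
          rw [lintegral_const, auxK_of h1, h2]
  have hfin : ∫⁻ ψ, u ψ * ⊤ ∂Q ≠ ⊤ := by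
    rw [← I2]; exact (I1le.trans_lt ENNReal.one_lt_top).ne
  have hu0 : ∀ᵐ ψ ∂Q, u ψ * ⊤ = 0 := by
    filter_upwards [ae_lt_top (hu.mul_const ⊤) hfin] with ψ hψ
    by_contra hne
    have : u ψ ≠ 0 := fun h0 => hne (by simp [h0])
    rw [ENNReal.mul_top this] at hψ
    exact lt_irrefl _ hψ
  have hz : ∫⁻ ψ, v (m' ψ) * m' ψ ∂Q = 0 := by
    rw [← I1, I2, lintegral_congr_ae hu0]
    simp
  have hvmm : Measurable (fun ψ => v (m' ψ) * m' ψ) := (hv.comp hm').mul hm'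
  rw [lintegral_eq_zero_iff hvmm] at hz
  filter_upwards [hz, hmm] with ψ h1 h2
  change m ψ = 0 ∨ m ψ = ⊤
  rw [h2]
  by_contra hne
  simp only [hvm, if_neg hne, Pi.zero_apply] at h1
  exact one_ne_zero h1

/-- bounded selection.  Let `Ψ` be a mass-stationary random measure on `ℝ^d`
with total mass `∞` a.s., and let `f : M(ℝ^d) × ℝ^d → {0,1}` be measurable and
translation-covariant; write `S_ψ := {x | f ψ x = 1}`.  Then a.s. `S_Ψ` is empty or unbounded,
and a.s. `Ψ(S_Ψ) ∈ {0, ∞}`. -/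
theorem stmt8 {d : ℕ} {Ω : Type*} [MeasurableSpace Ω] (P : Measure Ω) [IsProbabilityMeasure P]
    (Ψ : Ω → Measure (Vec d)) (hΨm : Measurable Ψ)
    (hbf : ∀ᵐ ω ∂P, BddFinite (Ψ ω))
    (hinf : ∀ᵐ ω ∂P, Ψ ω Set.univ = ⊤)
    (hms : MassStationary P Ψ)
    (f : Measure (Vec d) → Vec d → Bool)
    (hfm : Measurable (fun p : Measure (Vec d) × Vec d => f p.1 p.2))
    (hfcov : ∀ (t x : Vec d) (ψ : Measure (Vec d)), f (shiftM t ψ) (x - t) = f ψ x) :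
    (∀ᵐ ω ∂P, {x | f (Ψ ω) x = true} = ∅ ∨ ¬ Bornology.IsBounded {x | f (Ψ ω) x = true}) ∧
    (∀ᵐ ω ∂P, Ψ ω {x | f (Ψ ω) x = true} = 0 ∨ Ψ ω {x | f (Ψ ω) x = true} = ⊤) := by
  classical
  set Q := P.map Ψ with hQ
  have : IsProbabilityMeasure Q := Measure.isProbabilityMeasure_map hΨm.aemeasurable
  have hbQ : ∀ᵐ ψ ∂Q, BddFinite ψ := (ae_map_iff hΨm.aemeasurable aux_bf_meas).2 hbf
  have hiQ : ∀ᵐ ψ ∂Q, ψ Set.univ = ⊤ :=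
    (ae_map_iff hΨm.aemeasurable
      ((Measure.measurable_coe MeasurableSet.univ) (measurableSet_singleton ⊤))).2 hinf
  have hs := aux_mp P Ψ hΨm hbf hms
  have hfA : MeasurableSet {p : Measure (Vec d) × Vec d | f p.1 p.2 = true} :=
    hfm (measurableSet_singleton true)
  refine ⟨?_, ?_⟩
  · have hbd : ∀ ψ : Measure (Vec d), Bornology.IsBounded {x | f ψ x = true} ↔
        ∃ n : ℕ, ¬ ∃ z, f ψ z = true ∧ (n : ℝ) < ‖z‖ := by
      intro ψ
      constructor
      · intro hb
        obtain ⟨r, hr⟩ := hb.subset_closedBall 0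
        obtain ⟨n, hn⟩ := exists_nat_ge r
        refine ⟨n, ?_⟩
        rintro ⟨z, hz, hzn⟩
        have := hr hz
        simp only [Metric.mem_closedBall, dist_zero_right] at this
        linarith
      · rintro ⟨n, hn⟩
        refine (Metric.isBounded_closedBall (x := (0 : Vec d)) (r := n)).subset ?_
        intro z hz
        push Not at hn
        simpa using hn z hz
    have hbcov : ∀ (ψ : Measure (Vec d)) (t : Vec d),
        Bornology.IsBounded {x | f ψ x = true} →
        Bornology.IsBounded {x | f (shiftM t ψ) x = true} := by
      intro ψ t hb
      obtain ⟨r, hr⟩ := hb.subset_closedBall t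
      refine (Metric.isBounded_closedBall (x := (0 : Vec d)) (r := r)).subset ?_
      intro x hx
      have h1 := hfcov t (x + t) ψ
      rw [add_sub_cancel_right] at h1
      have h2 : x + t ∈ Metric.closedBall t r := hr (h1.symm.trans hx)
      simpa [dist_eq_norm] using h2
    have hbcov' : ∀ (ψ : Measure (Vec d)) (t : Vec d),
        Bornology.IsBounded {x | f (shiftM t ψ) x = true} ↔
        Bornology.IsBounded {x | f ψ x = true} := by
      intro ψ t
      refine ⟨fun hb => ?_, hbcov ψ t⟩
      have := hbcov _ (-t) hb
      rwa [aux_shift_shift, neg_add_cancel, aux_shift_zero] at this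
    have hbN : ∀ (ν : Measure (Measure (Vec d))) [SFinite ν],
        NullMeasurableSet {ψ | Bornology.IsBounded {x | f ψ x = true}} ν := by
      intro ν _
      have e : {ψ : Measure (Vec d) | Bornology.IsBounded {x | f ψ x = true}} =
          ⋃ n : ℕ, {ψ | ∃ z, (ψ, z) ∈ {p : Measure (Vec d) × Vec d |
            f p.1 p.2 = true} ∩ {p | (n : ℝ) < ‖p.2‖}}ᶜ := by
        ext ψ
        simp only [Set.mem_ofPred_eq, hbd, Set.mem_iUnion, Set.mem_compl_iff, Set.mem_inter_iff]
      rw [e]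
      refine NullMeasurableSet.iUnion fun n => (aux_proj _ ?_ ν).compl
      exact hfA.inter (measurableSet_lt measurable_const measurable_snd.norm)
    let A : ℕ → Set (Measure (Vec d) × Vec d) := fun n =>
      {p | Bornology.IsBounded {x | f p.1 x = true} ∧ ∃ z, f p.1 z = true ∧ dist z p.2 < n}
    have hA : ∀ n, ∀ᵐ ψ ∂Q, ψ {x | (ψ, x) ∈ A n} = 0 ∨ ψ {x | (ψ, x) ∈ A n} = ⊤ := by
      intro n
      refine aux_core Q hbQ hiQ hs (A n) ?_ ?_ ?_
      · have hq : Measure.QuasiMeasurePreserving Prod.fst (Q ⊗ₘ auxK d) Q := by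
          refine ⟨measurable_fst, ?_⟩
          refine Measure.AbsolutelyContinuous.mk fun s hsm hs0 => ?_
          rw [Measure.map_apply measurable_fst hsm]
          have := Measure.ae_compProd_of_ae_fst (auxK d) (p := fun x => x ∈ sᶜ) hsm.compl
            (measure_eq_zero_iff_ae_notMem.1 hs0)
          exact measure_eq_zero_iff_ae_notMem.2 this
        refine NullMeasurableSet.inter ((hbN Q).preimage hq) ?_
        refine aux_proj {q : (Measure (Vec d) × Vec d) × Vec d |
          f q.1.1 q.2 = true ∧ dist q.2 q.1.2 < n} ?_ _
        refine MeasurableSet.inter ?_ ?_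
        · exact ((measurable_fst.comp measurable_fst).prodMk measurable_snd :
            Measurable fun q : (Measure (Vec d) × Vec d) × Vec d => (q.1.1, q.2)) hfA
        · exact measurableSet_lt
            (measurable_snd.dist (measurable_snd.comp measurable_fst)) measurable_const
      · refine NullMeasurableSet.inter (hbN Q) ?_
        refine aux_proj {q : Measure (Vec d) × Vec d |
          f q.1 q.2 = true ∧ dist q.2 0 < n} ?_ _
        refine hfA.inter ?_
        exact measurableSet_lt (measurable_snd.dist measurable_const) measurable_const
      · intro ψ t x
        simp only [A, Set.mem_ofPred_eq, hbcov']
        refine and_congr_right fun _ => ?_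
        constructor
        · rintro ⟨z, hz, hd⟩
          refine ⟨z + t, ?_, ?_⟩
          · rw [← hfcov t, add_sub_cancel_right]; exact hz
          · rw [dist_eq_norm] at hd ⊢
            rwa [show z + t - x = z - (x - t) by abel]
        · rintro ⟨z, hz, hd⟩
          refine ⟨z - t, ?_, ?_⟩
          · rw [hfcov t]; exact hz
          · rwa [dist_sub_right]
    have key : ∀ᵐ ψ ∂Q, {x | f ψ x = true} = ∅ ∨ ¬ Bornology.IsBounded {x | f ψ x = true} := by
      filter_upwards [ae_all_iff.2 hA, hbQ, hiQ] with ψ h1 h2 h3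
      by_contra! hcon
      obtain ⟨⟨z, hz⟩, hb⟩ := hcon
      have h0 : ∀ n, ψ {x | (ψ, x) ∈ A n} = 0 := by
        intro n
        refine (h1 n).resolve_right (ne_of_lt (h2 _ ?_))
        refine (hb.thickening (δ := n)).subset ?_
        rintro x ⟨-, w, hw, hd⟩
        rw [Metric.mem_thickening_iff]
        exact ⟨w, hw, by rwa [dist_comm]⟩
      have hu : (Set.univ : Set (Vec d)) = ⋃ n, {x | (ψ, x) ∈ A n} := by
        symm
        rw [Set.eq_univ_iff_forall]
        intro x
        obtain ⟨n, hn⟩ := exists_nat_gt (dist z x)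
        exact Set.mem_iUnion.2 ⟨n, hb, z, hz, hn⟩
      rw [hu, measure_iUnion_null h0] at h3
      exact ENNReal.zero_ne_top h3
    exact ae_of_ae_map hΨm.aemeasurable key
  · have key := aux_core Q hbQ hiQ hs {p | f p.1 p.2 = true} hfA.nullMeasurableSet
      ((measurable_id.prodMk measurable_const hfA :
        MeasurableSet {ψ : Measure (Vec d) | f ψ 0 = true}).nullMeasurableSet)
      (fun ψ t x => by simp only [Set.mem_ofPred_eq, hfcov])
    exact ae_of_ae_map hΨm.aemeasurable key
end
end

section
/- Let (Ψ_n)_{n≥1} and Ψ be random measures on ℝ^d such that Ψ_n converges to Ψ in distribution with respect to the vague topology on M(ℝ^d) (the topology generated by the maps ψ ↦ ∫ f dψ for continuous compactly supported f : ℝ^d → ℝ). If every Ψ_n is mass-stationary, then Ψ is mass-stationary. -/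
open MeasureTheory ENNReal

noncomputable section

/-- Mass-stationarity expressed in terms of the law `Q` of a random measure on `ℝ^d`. -/
def MassStationaryLaw {d : ℕ} (Q : Measure (Measure (Vec d))) : Prop :=
  ∀ g : Measure (Vec d) → Vec d → Vec d → ℝ≥0∞,
    Measurable (fun p : Measure (Vec d) × Vec d × Vec d => g p.1 p.2.1 p.2.2) →
    Covariant3 g →
    ∫⁻ ψ, (∫⁻ y, g ψ 0 y ∂ψ) ∂Q = ∫⁻ ψ, (∫⁻ y, g ψ y 0 ∂ψ) ∂Q

/-- The vague topology on measures: the topology generated by the maps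
`ψ ↦ ∫ f dψ` for continuous compactly supported `f : ℝ^d → ℝ`. -/
def vagueTop (d : ℕ) : TopologicalSpace (Measure (Vec d)) :=
  ⨅ f : {f : Vec d → ℝ // Continuous f ∧ HasCompactSupport f},
    TopologicalSpace.induced (fun ψ : Measure (Vec d) => ∫ x, f.1 x ∂ψ) inferInstance


open Filter Topology ProbabilityTheory

namespace MS
variable {d : ℕ}

structure CC (f : Vec d → ℝ) : Prop where
  cont : Continuous f
  supp : HasCompactSupport f
  nonneg : ∀ x, 0 ≤ f x

def bump (r : ℝ) (x : Vec d) : ℝ := max 0 (min 1 (r + 1 - ‖x‖))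

lemma bump_cc (r : ℝ) : CC (bump (d := d) r) where
  cont := by unfold bump; fun_prop
  supp := by
    apply HasCompactSupport.intro (isCompact_closedBall (0 : Vec d) (r + 1))
    intro x hx
    simp only [Metric.mem_closedBall, dist_zero_right, not_le] at hx
    unfold bump
    apply max_eq_left
    exact (min_le_right _ _).trans (by linarith)
  nonneg := fun x => le_max_left _ _

lemma bump_le_one (r : ℝ) (x : Vec d) : bump r x ≤ 1 :=
  max_le zero_le_one (min_le_left _ _)

lemma bump_eq_one {r : ℝ} {x : Vec d} (h : ‖x‖ ≤ r) : bump r x = 1 := by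
  unfold bump
  rw [min_eq_left (by linarith), max_eq_right zero_le_one]

lemma bump_eq_zero {r : ℝ} {x : Vec d} (h : r + 1 ≤ ‖x‖) : bump r x = 0 := by
  unfold bump
  apply max_eq_left
  exact (min_le_right _ _).trans (by linarith)

lemma bump_pos {r : ℝ} {x : Vec d} (h : ‖x‖ < r + 1) : 0 < bump r x := by
  unfold bump
  apply lt_max_of_lt_right
  exact lt_min one_pos (by linarith)

lemma CC.add {f g : Vec d → ℝ} (hf : CC f) (hg : CC g) : CC (fun x => f x + g x) :=
  ⟨hf.cont.add hg.cont, hf.supp.add hg.supp, fun x => add_nonneg (hf.nonneg x) (hg.nonneg x)⟩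

lemma CC.zero : CC (fun _ : Vec d => (0 : ℝ)) :=
  ⟨continuous_const, HasCompactSupport.zero, fun _ => le_rfl⟩

lemma CC.mul {f w : Vec d → ℝ} (hf : CC f) (hw : Continuous w) (hw0 : ∀ x, 0 ≤ w x) :
    CC (fun x => w x * f x) :=
  ⟨hw.mul hf.cont, hf.supp.mul_left, fun x => mul_nonneg (hw0 x) (hf.nonneg x)⟩

lemma CC.shift {f : Vec d → ℝ} (hf : CC f) (y : Vec d) : CC (fun x => f (x - y)) :=
  ⟨hf.cont.comp (by fun_prop), by
    simpa [sub_eq_add_neg, Function.comp_def] using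
      hf.supp.comp_homeomorph (Homeomorph.addRight (-y)), fun x => hf.nonneg _⟩

lemma CC.neg {f : Vec d → ℝ} (hf : CC f) : CC (fun x => f (-x)) :=
  ⟨hf.cont.comp (by fun_prop), hf.supp.comp_homeomorph (Homeomorph.neg _), fun x => hf.nonneg _⟩

lemma CC.bdd {f : Vec d → ℝ} (hf : CC f) : ∃ C, 0 ≤ C ∧ ∀ x, f x ≤ C := by
  obtain ⟨C, hC⟩ := hf.supp.exists_bound_of_continuous hf.cont
  exact ⟨C, (norm_nonneg _).trans (hC 0), fun x => (le_abs_self _).trans (hC x)⟩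

lemma CC.ball {f : Vec d → ℝ} (hf : CC f) : ∃ r, 0 ≤ r ∧ ∀ x, r < ‖x‖ → f x = 0 := by
  obtain ⟨r, hr⟩ := hf.supp.isCompact.isBounded.subset_closedBall (0 : Vec d)
  refine ⟨max r 0, le_max_right _ _, fun x hx => ?_⟩
  by_contra h
  have := hr (subset_tsupport f (Function.mem_support.2 h))
  simp at this
  exact absurd (this.trans (le_max_left r 0)) (not_le.2 hx)

lemma CC.integrable {f : Vec d → ℝ} (hf : CC f) {ψ : Measure (Vec d)} (hψ : BddFinite ψ) :
    Integrable f ψ := by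
  have : IsFiniteMeasureOnCompacts ψ := ⟨fun K hK => hψ K hK.isBounded⟩
  exact hf.cont.integrable_of_hasCompactSupport hf.supp

lemma CC.int_nonneg {f : Vec d → ℝ} (hf : CC f) (ψ : Measure (Vec d)) : 0 ≤ ∫ x, f x ∂ψ :=
  integral_nonneg hf.nonneg

lemma CC.integral_eq {f : Vec d → ℝ} (hf : CC f) (ψ : Measure (Vec d)) :
    ∫ x, f x ∂ψ = (∫⁻ x, ENNReal.ofReal (f x) ∂ψ).toReal :=
  integral_eq_lintegral_of_nonneg_ae (Eventually.of_forall hf.nonneg)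
    hf.cont.measurable.aestronglyMeasurable

lemma CC.measurable_integral {f : Vec d → ℝ} (hf : CC f) :
    Measurable (fun ψ : Measure (Vec d) => ∫ x, f x ∂ψ) := by
  simp_rw [hf.integral_eq]
  exact (Measure.measurable_lintegral (hf.cont.measurable.ennreal_ofReal)).ennreal_toReal

lemma CC.vague {f : Vec d → ℝ} (hf : CC f) :
    @Continuous (Measure (Vec d)) ℝ (vagueTop d) _ (fun ψ => ∫ x, f x ∂ψ) := by
  apply continuous_iff_le_induced.2
  exact iInf_le (fun f : {f : Vec d → ℝ // Continuous f ∧ HasCompactSupport f} =>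
    TopologicalSpace.induced (fun ψ : Measure (Vec d) => ∫ x, f.1 x ∂ψ) inferInstance)
    ⟨f, hf.cont, hf.supp⟩

lemma bf_iff {ψ : Measure (Vec d)} :
    BddFinite ψ ↔ ∀ n : ℕ, ψ (Metric.closedBall 0 n) < ⊤ := by
  constructor
  · intro h n; exact h _ Metric.isBounded_closedBall
  · intro h s hs
    obtain ⟨r, hr⟩ := hs.subset_closedBall (0 : Vec d)
    obtain ⟨n, hn⟩ := exists_nat_ge r
    exact (measure_mono (hr.trans (Metric.closedBall_subset_closedBall hn))).trans_lt (h n)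

lemma meas_bf : MeasurableSet {ψ : Measure (Vec d) | BddFinite ψ} := by
  simp_rw [bf_iff, Set.ofPred_forall]
  exact MeasurableSet.iInter fun n =>
    measurableSet_lt (Measure.measurable_coe measurableSet_closedBall) measurable_const

open Classical in
def rho (ψ : Measure (Vec d)) : Measure (Vec d) := if BddFinite ψ then ψ else 0

lemma rho_of {ψ : Measure (Vec d)} (h : BddFinite ψ) : rho ψ = ψ := if_pos h

lemma bf_zero : BddFinite (0 : Measure (Vec d)) := fun s _ => by simp

lemma rho_bf (ψ : Measure (Vec d)) : BddFinite (rho ψ) := by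
  unfold rho; split_ifs with h
  · exact h
  · exact bf_zero

lemma measurable_rho : Measurable (rho (d := d)) := by
  classical
  exact Measurable.ite meas_bf measurable_id measurable_const

lemma shift_apply (t : Vec d) (ψ : Measure (Vec d)) (s : Set (Vec d)) :
    shiftM t ψ s = ψ ((fun x => x - t) ⁻¹' s) :=
  (MeasurableEquiv.subRight t).map_apply s

lemma shift_bf {t : Vec d} {ψ : Measure (Vec d)} (h : BddFinite ψ) : BddFinite (shiftM t ψ) := by
  intro s hs
  rw [shift_apply]
  apply h
  have : (fun x => x - t) ⁻¹' s = (fun x => x + t) '' s := by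
    ext x; simp [sub_eq_add_neg]
  rw [this]
  exact (LipschitzWith.id.add (LipschitzWith.const t)).isBounded_image hs

lemma shift_shift (s t : Vec d) (ψ : Measure (Vec d)) :
    shiftM s (shiftM t ψ) = shiftM (s + t) ψ := by
  unfold shiftM
  rw [Measure.map_map (by fun_prop) (by fun_prop)]
  congr 1; ext x; simp [sub_sub, add_comm]

lemma shift_zero (ψ : Measure (Vec d)) : shiftM 0 ψ = ψ := by
  unfold shiftM; simp

lemma shift_bf_iff {t : Vec d} {ψ : Measure (Vec d)} : BddFinite (shiftM t ψ) ↔ BddFinite ψ := by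
  refine ⟨fun h => ?_, shift_bf⟩
  have := shift_bf (t := -t) h
  rwa [shift_shift, neg_add_cancel, shift_zero] at this

lemma rho_shift (t : Vec d) (ψ : Measure (Vec d)) : rho (shiftM t ψ) = shiftM t (rho ψ) := by
  by_cases h : BddFinite ψ
  · rw [rho_of h, rho_of (shift_bf h)]
  · have h' : ¬ BddFinite (shiftM t ψ) := fun h' => h (shift_bf_iff.1 h')
    rw [rho, if_neg h', rho, if_neg h]
    unfold shiftM; simp

lemma integral_shift (f : Vec d → ℝ) (t : Vec d) (ψ : Measure (Vec d)) :
    ∫ x, f x ∂(shiftM t ψ) = ∫ x, f (x - t) ∂ψ :=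
  integral_map_equiv (MeasurableEquiv.subRight t) f

lemma CC.cont_shift {f : Vec d → ℝ} (hf : CC f) {ψ : Measure (Vec d)} (hψ : BddFinite ψ) :
    Continuous (fun y => ∫ x, f (x - y) ∂ψ) := by
  obtain ⟨C, hC0, hC⟩ := hf.bdd
  obtain ⟨r, hr0, hr⟩ := hf.ball
  rw [continuous_iff_continuousAt]
  intro y₀
  apply continuousAt_of_dominated (bound := fun x => C * bump (r + ‖y₀‖ + 1) x)
  · exact Eventually.of_forall fun y => (hf.shift y).cont.measurable.aestronglyMeasurable
  · have : ∀ᶠ y in 𝓝 y₀, ‖y‖ < ‖y₀‖ + 1 :=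
      continuous_norm.continuousAt.eventually (gt_mem_nhds (by linarith))
    filter_upwards [this] with y hy
    refine Eventually.of_forall fun x => ?_
    rw [Real.norm_of_nonneg (hf.nonneg _)]
    by_cases hx : ‖x‖ ≤ r + ‖y₀‖ + 1
    · rw [bump_eq_one hx, mul_one]; exact hC _
    · rw [hr (x - y)]
      · exact mul_nonneg hC0 ((bump_cc _).nonneg _)
      · have := norm_sub_norm_le x y
        push Not at hx
        linarith
  · exact ((bump_cc _).integrable hψ).const_mul C
  · exact Eventually.of_forall fun x => (hf.cont.comp (by fun_prop)).continuousAt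

lemma CC.measurable_shift {f : Vec d → ℝ} (hf : CC f) :
    Measurable (fun p : Measure (Vec d) × Vec d => ∫ x, f (x - p.2) ∂(rho p.1)) := by
  have := measurable_uncurry_of_continuous_of_measurable
    (u := fun (y : Vec d) (ψ : Measure (Vec d)) => ∫ x, f (x - y) ∂(rho ψ))
    (fun ψ => hf.cont_shift (rho_bf ψ))
    (fun y => (hf.shift y).measurable_integral.comp measurable_rho)
  exact this.comp measurable_swap

/-! countable family -/
abbrev Idx (d : ℕ) := (Fin d → ℚ) × (Fin d → ℚ) × ℕ

def box (a b : Fin d → ℚ) : Set (Vec d) := Set.pi Set.univ (fun i => Set.Ioo (a i : ℝ) (b i))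

lemma box_open (a b : Fin d → ℚ) : IsOpen (box a b) :=
  isOpen_set_pi Set.finite_univ fun _ _ => isOpen_Ioo

lemma box_bdd (a b : Fin d → ℚ) : Bornology.IsBounded (box a b) :=
  Bornology.IsBounded.pi fun _ => Metric.isBounded_Ioo _ _

lemma box_inter (a b a' b' : Fin d → ℚ) : box a b ∩ box a' b' = box (a ⊔ a') (b ⊓ b') := by
  unfold box
  rw [← Set.pi_inter_distrib]
  simp [Set.Ioo_inter_Ioo]

def fam (i : Idx d) (x : Vec d) : ℝ :=
  1 - ((thickenedIndicator (δ := 1 / ((i.2.2 : ℝ) + 1)) (by positivity) (box i.1 i.2.1)ᶜ x : NNReal) : ℝ)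

lemma fam_zero (i : Idx d) {x : Vec d} (hx : x ∉ box i.1 i.2.1) : fam i x = 0 := by
  unfold fam
  rw [thickenedIndicator_one _ _ hx]; simp

lemma fam_le_one (i : Idx d) (x : Vec d) : fam i x ≤ 1 := by
  unfold fam; simp

lemma fam_cc (i : Idx d) : CC (fam i) where
  cont := by unfold fam; fun_prop
  supp := by
    have hb := (box_bdd i.1 i.2.1).isCompact_closure
    exact HasCompactSupport.intro hb fun x hx => fam_zero i fun h => hx (subset_closure h)
  nonneg := fun x => by
    unfold fam
    have := thickenedIndicator_le_one (δ := 1 / ((i.2.2 : ℝ) + 1)) (by positivity) (box i.1 i.2.1)ᶜ x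
    rw [sub_nonneg]; exact_mod_cast this

lemma fam_tendsto (a b : Fin d → ℚ) (x : Vec d) :
    Tendsto (fun n : ℕ => ENNReal.ofReal (fam (a, b, n) x)) atTop
      (𝓝 ((box a b).indicator (fun _ => (1 : ℝ≥0∞)) x)) := by
  have h := thickenedIndicator_tendsto_indicator_closure (δseq := fun n : ℕ => 1 / ((n : ℝ) + 1))
    (fun n => by positivity) tendsto_one_div_add_atTop_nhds_zero_nat (box a b)ᶜ
  rw [tendsto_pi_nhds] at h
  have h := h x
  rw [(box_open a b).isClosed_compl.closure_eq] at h
  have h2 : Tendsto (fun n : ℕ => ENNReal.ofReal (fam (a, b, n) x)) atTop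
    (𝓝 (ENNReal.ofReal (1 - (((box a b)ᶜ.indicator (fun _ => (1 : NNReal)) x : NNReal) : ℝ)))) := by
    apply ENNReal.tendsto_ofReal
    exact tendsto_const_nhds.sub (NNReal.tendsto_coe.2 h)
  convert h2 using 2
  by_cases hx : x ∈ box a b <;> simp [hx]

lemma borel_box : (inferInstance : MeasurableSpace (Vec d)) =
    MeasurableSpace.generateFrom {s | ∃ a b : Fin d → ℚ, s = box a b} := by
  apply le_antisymm
  · have h : MeasurableSpace.generateFrom (Set.pi Set.univ '' Set.pi Set.univ
        (fun _ : Fin d => ⋃ (a : ℚ) (b : ℚ) (_ : a < b), {Set.Ioo (a : ℝ) (b : ℝ)})) =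
        (inferInstance : MeasurableSpace (Vec d)) := by
      apply generateFrom_eq_pi
      · intro i; rw [← Real.borel_eq_generateFrom_Ioo_rat]; exact (BorelSpace.measurable_eq).symm
      · intro i
        refine ⟨fun n : ℕ => Set.Ioo (((-((n : ℚ) + 1) : ℚ)) : ℝ) (((n : ℚ) + 1 : ℚ) : ℝ), ?_, ?_⟩
        · intro n
          simp only [Set.mem_iUnion, Set.mem_singleton_iff]
          have : (0 : ℚ) ≤ n := Nat.cast_nonneg n
          exact ⟨-((n : ℚ) + 1), (n : ℚ) + 1, by linarith, rfl⟩
        · rw [Set.eq_univ_iff_forall]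
          intro x
          obtain ⟨k, hk⟩ := exists_nat_gt |x|
          rw [Set.mem_iUnion]
          refine ⟨k, ?_⟩
          rw [abs_lt] at hk
          push_cast
          constructor <;> linarith [hk.1, hk.2]
    rw [← h]
    apply MeasurableSpace.generateFrom_mono
    rintro _ ⟨t, ht, rfl⟩
    simp only [Set.mem_pi, Set.mem_univ, Set.mem_iUnion, Set.mem_singleton_iff, forall_const] at ht
    choose a b hab h using ht
    refine ⟨a, b, ?_⟩
    unfold box
    congr 1; ext1 i; exact h i
  · apply MeasurableSpace.generateFrom_le
    rintro _ ⟨a, b, rfl⟩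
    exact (box_open a b).measurableSet

lemma box_iUnion : ⋃ k : ℕ, box (d := d) (fun _ => -(k : ℚ)) (fun _ => (k : ℚ)) = Set.univ := by
  rw [Set.eq_univ_iff_forall]
  intro x
  obtain ⟨k, hk⟩ := exists_nat_gt ‖x‖
  rw [Set.mem_iUnion]
  refine ⟨k, fun i _ => ?_⟩
  have := (norm_le_pi_norm x i).trans_lt hk
  rw [Real.norm_eq_abs, abs_lt] at this
  simpa using this

lemma box_mono : Monotone (fun k : ℕ => box (d := d) (fun _ => -(k : ℚ)) (fun _ => (k : ℚ))) := by
  intro k l hkl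
  apply Set.pi_mono
  intro i _
  have : (k : ℝ) ≤ l := by exact_mod_cast hkl
  apply Set.Ioo_subset_Ioo <;> push_cast <;> linarith

lemma measurable_of_fam {β : Type*} [MeasurableSpace β] (κ : β → Measure (Vec d))
    (hκ : ∀ b, BddFinite (κ b)) (h : ∀ i : Idx d, Measurable fun b => ∫ x, fam i x ∂(κ b)) :
    Measurable κ := by
  have hbox : ∀ a b : Fin d → ℚ, Measurable fun z => κ z (box a b) := by
    intro a b
    apply measurable_of_tendsto_metrizable
      (f := fun (n : ℕ) z => ENNReal.ofReal (∫ x, fam (a, b, n) x ∂(κ z)))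
    · intro n; exact (h _).ennreal_ofReal
    · rw [tendsto_pi_nhds]
      intro z
      have := tendsto_lintegral_of_dominated_convergence (μ := κ z)
        (F := fun (n : ℕ) x => ENNReal.ofReal (fam (a, b, n) x))
        (f := (box a b).indicator (fun _ => (1 : ℝ≥0∞)))
        ((box a b).indicator (fun _ => (1 : ℝ≥0∞)))
        (fun n => (fam_cc _).cont.measurable.ennreal_ofReal)
        (fun n => Eventually.of_forall fun x => by
          by_cases hx : x ∈ box a b
          · simp [hx, fam_le_one]
          · simp [hx, fam_zero (a, b, n) hx])
        (by
          rw [lintegral_indicator_const (box_open a b).measurableSet, one_mul]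
          exact (hκ z _ (box_bdd a b)).ne)
        (Eventually.of_forall fun x => fam_tendsto a b x)
      rw [lintegral_indicator_const (box_open a b).measurableSet, one_mul] at this
      refine this.congr fun n => ?_
      rw [← ofReal_integral_eq_lintegral_ofReal ((fam_cc _).integrable (hκ z))
        (Eventually.of_forall (fam_cc _).nonneg)]
  have hres : ∀ k : ℕ, Measurable fun z =>
      (κ z).restrict (box (fun _ => -(k : ℚ)) (fun _ => (k : ℚ))) := by
    intro k
    have : ∀ z, IsFiniteMeasure ((κ z).restrict (box (fun _ => -(k : ℚ)) (fun _ => (k : ℚ)))) :=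
      fun z => ⟨by rw [Measure.restrict_apply_univ]; exact hκ z _ (box_bdd _ _)⟩
    apply Measurable.measure_of_isPiSystem borel_box
    · rintro _ ⟨a, b, rfl⟩ _ ⟨a', b', rfl⟩ _
      exact ⟨_, _, box_inter _ _ _ _⟩
    · rintro _ ⟨a, b, rfl⟩
      simp_rw [Measure.restrict_apply (box_open a b).measurableSet, box_inter]
      exact hbox _ _
    · simp_rw [Measure.restrict_apply_univ]
      exact hbox _ _
  rw [Measure.measurable_measure]
  intro s hs
  have : (fun z => κ z s) = fun z => ⨆ k : ℕ,
      (κ z).restrict (box (fun _ => -(k : ℚ)) (fun _ => (k : ℚ))) s := by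
    ext z
    simp_rw [Measure.restrict_apply hs]
    rw [← Monotone.measure_iUnion, ← Set.inter_iUnion, box_iUnion, Set.inter_univ]
    exact fun k l hkl => Set.inter_subset_inter_right _ (box_mono hkl)
  rw [this]
  exact Measurable.iSup fun k => (Measure.measurable_coe hs).comp (hres k)

end MS

namespace MS
variable {d : ℕ}

lemma sfinite_of_finite {α β : Type*} [MeasurableSpace α] [MeasurableSpace β] (κ : Kernel α β)
    (h : ∀ a, κ a Set.univ < ⊤) : IsSFiniteKernel κ := by
  classical
  have hm : Measurable fun a => κ a Set.univ := κ.measurable_coe MeasurableSet.univ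
  have hs : ∀ m : ℕ, MeasurableSet {a | ⌊(κ a Set.univ).toReal⌋₊ = m} := fun m =>
    (Nat.measurable_floor.comp hm.ennreal_toReal) (measurableSet_singleton m)
  have hfin : ∀ m : ℕ, IsFiniteKernel (Kernel.piecewise (hs m) κ 0) := by
    intro m
    refine ⟨(m + 1 : ℕ), ENNReal.natCast_lt_top _, fun a => ?_⟩
    rw [Kernel.piecewise_apply]
    split_ifs with ha
    · have h1 := Nat.lt_floor_add_one (κ a Set.univ).toReal
      have ha' : ⌊(κ a Set.univ).toReal⌋₊ = m := ha
      rw [ha'] at h1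
      rw [← ENNReal.ofReal_toReal (h a).ne, ← ENNReal.ofReal_natCast]
      apply ENNReal.ofReal_le_ofReal
      push_cast; exact h1.le
    · simp
  have : κ = Kernel.sum fun m : ℕ => Kernel.piecewise (hs m) κ 0 := by
    ext a s hs'
    rw [Kernel.sum_apply' _ _ hs', tsum_eq_single ⌊(κ a Set.univ).toReal⌋₊]
    · rw [Kernel.piecewise_apply, if_pos (by exact rfl)]
    · intro m hm
      rw [Kernel.piecewise_apply, if_neg]
      · simp
      · intro h'; exact hm h'.symm
  rw [this]
  infer_instance

def rhoK (d : ℕ) : Kernel (Measure (Vec d)) (Vec d) := ⟨rho, measurable_rho⟩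

lemma rhoK_apply (ψ : Measure (Vec d)) : rhoK d ψ = rho ψ := rfl

instance : IsSFiniteKernel (rhoK d) := by
  have hms : ∀ n : ℕ, MeasurableSet (disjointed (fun n : ℕ => Metric.closedBall (0 : Vec d) n) n) :=
    fun n => MeasurableSet.disjointed (fun n => measurableSet_closedBall) n
  have hsum : rhoK d = Kernel.sum fun n : ℕ => (rhoK d).restrict (hms n) := by
    ext ψ s hs
    rw [Kernel.sum_apply]
    simp_rw [Kernel.restrict_apply]
    rw [← Measure.restrict_iUnion (disjoint_disjointed _) hms, iUnion_disjointed,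
      Metric.iUnion_closedBall_nat, Measure.restrict_univ]
  have : ∀ n : ℕ, IsSFiniteKernel ((rhoK d).restrict (hms n)) := by
    intro n
    apply sfinite_of_finite
    intro ψ
    rw [Kernel.restrict_apply, Measure.restrict_apply_univ]
    exact rho_bf ψ _ (Metric.isBounded_closedBall.subset (disjointed_subset _ n))
  rw [hsum]
  infer_instance

abbrev X (d : ℕ) := Measure (Vec d) × Vec d

def N (Q : Measure (Measure (Vec d))) : Measure (X d) := Q ⊗ₘ (rhoK d)

def tau (p : X d) : X d := (shiftM p.2 (rho p.1), -p.2)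

lemma measurable_shift : Measurable (fun p : X d => shiftM p.2 (rho p.1)) := by
  apply measurable_of_fam
  · intro p; exact shift_bf (rho_bf _)
  · intro i
    simp_rw [integral_shift]
    exact (fam_cc i).measurable_shift

lemma measurable_tau : Measurable (tau (d := d)) :=
  measurable_shift.prodMk measurable_snd.neg

lemma lint_N (Q : Measure (Measure (Vec d))) [SFinite Q] {F : X d → ℝ≥0∞} (hF : Measurable F) :
    ∫⁻ p, F p ∂(N Q) = ∫⁻ ψ, ∫⁻ y, F (ψ, y) ∂(rho ψ) ∂Q :=
  Measure.lintegral_compProd hF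

lemma ms_imp (Q : Measure (Measure (Vec d))) [SFinite Q] (hbf : ∀ᵐ ψ ∂Q, BddFinite ψ)
    (h : MassStationaryLaw Q) {F : X d → ℝ≥0∞} (hF : Measurable F) :
    ∫⁻ p, F p ∂(N Q) = ∫⁻ p, F (tau p) ∂(N Q) := by
  have := h (fun ψ x y => F (shiftM x (rho ψ), y - x)) (by
      apply hF.comp
      refine Measurable.prodMk (measurable_shift.comp (f := fun p : Measure (Vec d) × Vec d × Vec d => (p.1, p.2.1)) (by fun_prop)) (by fun_prop)) (by
      intro t x y ψ
      simp [rho_shift, shift_shift])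
  rw [lint_N Q hF, lint_N Q (F := fun p => F (tau p)) (hF.comp measurable_tau)]
  convert this using 1
  · apply lintegral_congr_ae
    filter_upwards [hbf] with ψ hψ
    simp [rho_of hψ, shift_zero]
  · apply lintegral_congr_ae
    filter_upwards [hbf] with ψ hψ
    simp [rho_of hψ, tau]

lemma ms_of (Q : Measure (Measure (Vec d))) [SFinite Q] (hbf : ∀ᵐ ψ ∂Q, BddFinite ψ)
    (h : ∀ F : X d → ℝ≥0∞, Measurable F → ∫⁻ p, F p ∂(N Q) = ∫⁻ p, F (tau p) ∂(N Q)) :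
    MassStationaryLaw Q := by
  intro g hg hcov
  have hF : Measurable (fun p : X d => g p.1 0 p.2) :=
    hg.comp (f := fun p : X d => (p.1, (0 : Vec d), p.2)) (by fun_prop)
  have := h _ hF
  rw [lint_N Q hF, lint_N Q (F := fun p => g (tau p).1 0 (tau p).2) (hF.comp measurable_tau)] at this
  convert this using 1
  · apply lintegral_congr_ae
    filter_upwards [hbf] with ψ hψ
    simp [rho_of hψ]
  · apply lintegral_congr_ae
    filter_upwards [hbf] with ψ hψ
    simp only [rho_of hψ, tau]
    apply lintegral_congr
    intro y
    simpa using (hcov y y 0 ψ).symm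

end MS

namespace MS
variable {d : ℕ}

lemma int_bound {ψ : Measure (Vec d)} (hψ : BddFinite ψ) {R c : ℝ} {h : Vec d → ℝ}
    (h1 : ∀ y, ‖y‖ ≤ R → |h y| ≤ c) (h2 : ∀ y, R < ‖y‖ → h y = 0) :
    |∫ y, h y ∂ψ| ≤ c * ψ.real (Metric.closedBall 0 R) := by
  rw [← setIntegral_eq_integral_of_forall_compl_eq_zero (s := Metric.closedBall (0 : Vec d) R)]
  · exact norm_setIntegral_le_of_norm_le_const (f := h) (C := c) (s := Metric.closedBall (0 : Vec d) R)
      (hψ _ Metric.isBounded_closedBall)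
      (fun y hy => h1 y (by simpa using hy))
  · intro y hy
    exact h2 y (by simpa using hy)

lemma exp_bound {a b m : ℝ} (ha : m ≤ a) (hb : m ≤ b) :
    |Real.exp (-a) - Real.exp (-b)| ≤ Real.exp (-m) * min 1 |a - b| := by
  wlog hab : a ≤ b generalizing a b
  · rw [abs_sub_comm, abs_sub_comm a b]; exact this hb ha (le_of_not_ge hab)
  have h1 : Real.exp (-b) = Real.exp (-a) * Real.exp (-(b - a)) := by
    rw [← Real.exp_add]; congr 1; ring
  have h2 : Real.exp (-a) - Real.exp (-b) = Real.exp (-a) * (1 - Real.exp (-(b - a))) := by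
    rw [h1]; ring
  have h3 : Real.exp (-(b - a)) ≤ 1 := Real.exp_le_one_iff.2 (by linarith)
  rw [h2, abs_mul, abs_of_pos (Real.exp_pos _), abs_of_nonneg (by linarith)]
  apply mul_le_mul (Real.exp_le_exp.2 (by linarith)) _ (by linarith) (Real.exp_pos _).le
  apply le_min
  · linarith [Real.exp_pos (-(b - a))]
  · rw [abs_sub_comm, abs_of_nonneg (by linarith)]
    linarith [Real.add_one_le_exp (-(b - a))]

lemma mexp {m : ℝ} : Real.exp (-m) * m ≤ 1 := by
  have := Real.add_one_le_exp m
  rw [Real.exp_neg, inv_mul_le_iff₀ (Real.exp_pos _)]; linarith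

lemma mass_le {f : Vec d → ℝ} (hf : CC f) {R : ℝ} (hfR : ∀ x, ‖x‖ ≤ 2 * R → 1 ≤ f x)
    {ψ : Measure (Vec d)} (hψ : BddFinite ψ) {y : Vec d} (hy : ‖y‖ ≤ R) :
    ψ.real (Metric.closedBall 0 R) ≤ ∫ x, f (x - y) ∂ψ := by
  rw [← integral_indicator_one measurableSet_closedBall]
  apply integral_mono
  · exact (integrable_indicator_iff measurableSet_closedBall).2
      (integrableOn_const (hψ _ Metric.isBounded_closedBall).ne)
  · exact (hf.shift y).integrable hψ
  · intro x
    by_cases hx : x ∈ Metric.closedBall (0 : Vec d) R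
    · rw [Set.indicator_of_mem hx]
      apply hfR
      have := norm_sub_le x y
      simp at hx
      linarith
    · rw [Set.indicator_of_notMem hx]
      exact hf.nonneg _

def A (f w : Vec d → ℝ) (ψ : Measure (Vec d)) : ℝ := Real.exp (-∫ x, f x ∂ψ) * ∫ y, w y ∂ψ

def B (f w : Vec d → ℝ) (ψ : Measure (Vec d)) : ℝ :=
  ∫ y, Real.exp (-∫ x, f (x - y) ∂(rho ψ)) * w (-y) ∂(rho ψ)

def Ft (f w : Vec d → ℝ) (p : X d) : ℝ≥0∞ := ENNReal.ofReal (Real.exp (-∫ x, f x ∂p.1) * w p.2)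

lemma Ft_meas {f w : Vec d → ℝ} (hf : CC f) (hw : CC w) : Measurable (Ft f w) := by
  have h1 : Measurable fun p : X d => ∫ x, f x ∂p.1 := hf.measurable_integral.comp measurable_fst
  have h2 : Measurable fun p : X d => w p.2 := hw.cont.measurable.comp measurable_snd
  unfold Ft
  exact ((Real.measurable_exp.comp h1.neg).mul h2).ennreal_ofReal

lemma B_cc {f w : Vec d → ℝ} (hf : CC f) (hw : CC w) {ψ : Measure (Vec d)} (hψ : BddFinite ψ) :
    CC (fun y => Real.exp (-∫ x, f (x - y) ∂ψ) * w (-y)) :=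
  hw.neg.mul (Real.continuous_exp.comp (hf.cont_shift hψ).neg) (fun _ => (Real.exp_pos _).le)

lemma A_nonneg {f w : Vec d → ℝ} (hw : CC w) (ψ : Measure (Vec d)) : 0 ≤ A f w ψ :=
  mul_nonneg (Real.exp_pos _).le (hw.int_nonneg _)

lemma B_nonneg {f w : Vec d → ℝ} (hf : CC f) (hw : CC w) (ψ : Measure (Vec d)) : 0 ≤ B f w ψ :=
  (B_cc hf hw (rho_bf ψ)).int_nonneg _

lemma A_meas {f w : Vec d → ℝ} (hf : CC f) (hw : CC w) : Measurable (A f w) :=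
  (Real.measurable_exp.comp hf.measurable_integral.neg).mul hw.measurable_integral

lemma Ft_tau (f w : Vec d → ℝ) (ψ : Measure (Vec d)) (y : Vec d) :
    Ft f w (tau (ψ, y)) = ENNReal.ofReal (Real.exp (-∫ x, f (x - y) ∂(rho ψ)) * w (-y)) := by
  simp only [Ft, tau, integral_shift]

lemma B_lint {f w : Vec d → ℝ} (hf : CC f) (hw : CC w) (ψ : Measure (Vec d)) :
    ENNReal.ofReal (B f w ψ) = ∫⁻ y, Ft f w (tau (ψ, y)) ∂(rho ψ) := by
  simp_rw [Ft_tau]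
  exact ofReal_integral_eq_lintegral_ofReal ((B_cc hf hw (rho_bf ψ)).integrable (rho_bf ψ))
    (Eventually.of_forall (B_cc hf hw (rho_bf ψ)).nonneg)

lemma B_meas {f w : Vec d → ℝ} (hf : CC f) (hw : CC w) : Measurable (B f w) := by
  have h1 : Measurable fun ψ => ∫⁻ y, Ft f w (tau (ψ, y)) ∂(rhoK d ψ) :=
    Measurable.lintegral_kernel_prod_right' (κ := rhoK d) (f := fun p => Ft f w (tau p))
      ((Ft_meas hf hw).comp measurable_tau)
  have h2 : B f w = fun ψ => (∫⁻ y, Ft f w (tau (ψ, y)) ∂(rhoK d ψ)).toReal := by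
    ext ψ
    rw [rhoK_apply, ← B_lint hf hw, ENNReal.toReal_ofReal (B_nonneg hf hw ψ)]
  rw [h2]; exact h1.ennreal_toReal

lemma lint_A {f w : Vec d → ℝ} (hf : CC f) (hw : CC w) (Q : Measure (Measure (Vec d))) [SFinite Q]
    (hbf : ∀ᵐ ψ ∂Q, BddFinite ψ) :
    ∫⁻ p, Ft f w p ∂(N Q) = ∫⁻ ψ, ENNReal.ofReal (A f w ψ) ∂Q := by
  rw [lint_N Q (Ft_meas hf hw)]
  apply lintegral_congr_ae
  filter_upwards [hbf] with ψ hψ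
  rw [rho_of hψ]
  simp only [Ft, A]
  rw [← integral_const_mul, ofReal_integral_eq_lintegral_ofReal ((hw.integrable hψ).const_mul _)]
  exact Eventually.of_forall fun y => mul_nonneg (Real.exp_pos _).le (hw.nonneg y)

lemma lint_B {f w : Vec d → ℝ} (hf : CC f) (hw : CC w) (Q : Measure (Measure (Vec d))) [SFinite Q] :
    ∫⁻ p, Ft f w (tau p) ∂(N Q) = ∫⁻ ψ, ENNReal.ofReal (B f w ψ) ∂Q := by
  rw [lint_N Q (F := fun p => Ft f w (tau p)) ((Ft_meas hf hw).comp measurable_tau)]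
  simp_rw [B_lint hf hw]

section
variable {f w : Vec d → ℝ} (hf : CC f) (hw : CC w) {R C : ℝ}
  (hfR : ∀ x, ‖x‖ ≤ 2 * R → 1 ≤ f x) (hwR : ∀ x, R < ‖x‖ → w x = 0) (hC0 : 0 ≤ C)
  (hC : ∀ x, w x ≤ C) (hR : 0 ≤ R)
include hf hw hfR hwR hC0 hC hR

lemma A_le {ψ : Measure (Vec d)} (hψ : BddFinite ψ) : A f w ψ ≤ C := by
  have h1 : |∫ y, w y ∂ψ| ≤ C * ψ.real (Metric.closedBall 0 R) :=
    int_bound hψ (fun y _ => by rw [abs_of_nonneg (hw.nonneg y)]; exact hC y) hwR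
  have h2 := mass_le hf hfR hψ (y := 0) (by simpa using hR)
  simp only [sub_zero] at h2
  set m := ψ.real (Metric.closedBall 0 R)
  have hm : 0 ≤ m := measureReal_nonneg
  calc A f w ψ ≤ Real.exp (-m) * (C * m) := by
        apply mul_le_mul (Real.exp_le_exp.2 (by linarith)) ((le_abs_self _).trans h1)
          (hw.int_nonneg _) (Real.exp_pos _).le
    _ = C * (Real.exp (-m) * m) := by ring
    _ ≤ C := mul_le_of_le_one_right hC0 mexp

lemma B_le (ψ : Measure (Vec d)) : B f w ψ ≤ C := by
  have hψ := rho_bf ψ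
  unfold B
  generalize rho ψ = ψ at *
  set m := ψ.real (Metric.closedBall 0 R)
  have h1 : |∫ y, Real.exp (-∫ x, f (x - y) ∂ψ) * w (-y) ∂ψ| ≤ (Real.exp (-m) * C) * m := by
    apply int_bound hψ
    · intro y hy
      rw [abs_of_nonneg ((B_cc hf hw hψ).nonneg y)]
      apply mul_le_mul (Real.exp_le_exp.2 (neg_le_neg (mass_le hf hfR hψ hy))) (hC _) (hw.nonneg _)
        (Real.exp_pos _).le
    · intro y hy
      rw [hwR (-y) (by simpa using hy), mul_zero]
  calc _ ≤ _ := (le_abs_self _).trans h1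
    _ = C * (Real.exp (-m) * m) := by ring
    _ ≤ C := mul_le_of_le_one_right hC0 mexp

lemma approx {r : ℝ} (hr : ∀ x, r < ‖x‖ → f x = 0) {η : ℝ} (hη : 0 < η) :
    ∃ G : Measure (Vec d) → ℝ, @Continuous (Measure (Vec d)) ℝ (vagueTop d) _ G ∧ Measurable G ∧
      ∀ ψ, BddFinite ψ → |B f w ψ - G ψ| ≤ C * min 1 (η * ∫ x, bump (r + R) x ∂ψ) := by
  have huc : UniformContinuous f := hf.cont.uniformContinuous_of_tendsto_cocompact
    hf.supp.is_zero_at_infty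
  obtain ⟨δ, hδ, huc⟩ := Metric.uniformContinuous_iff.1 huc η hη
  obtain ⟨t, htR, htf, hcov⟩ := (isCompact_closedBall (0 : Vec d) R).finite_cover_balls hδ
  have := htf.fintype
  obtain ⟨χ, hχ⟩ := PartitionOfUnity.exists_isSubordinate
    (Metric.isClosed_closedBall (x := (0 : Vec d)) (ε := R))
    (fun j : t => Metric.ball (j : Vec d) δ) (fun j => Metric.isOpen_ball) (by
      simpa [Set.iUnion_subtype] using hcov)
  have hcc : ∀ j : t, CC (fun y => χ j y * w (-y)) := fun j =>
    hw.neg.mul (χ j).continuous (χ.nonneg j)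
  refine ⟨fun ψ => ∑ j : t, Real.exp (-∫ x, f (x - j) ∂ψ) * ∫ y, χ j y * w (-y) ∂ψ, ?_, ?_, ?_⟩
  · let := vagueTop d
    apply continuous_finsetSum
    intro j _
    exact (Real.continuous_exp.comp (hf.shift _).vague.neg).mul (hcc j).vague
  · apply Finset.measurable_sum
    intro j _
    exact (Real.measurable_exp.comp (hf.shift _).measurable_integral.neg).mul
      (hcc j).measurable_integral
  · intro ψ hψ
    unfold B
    rw [rho_of hψ]
    set m := ψ.real (Metric.closedBall 0 R) with hm
    set K := min 1 (η * ∫ x, bump (r + R) x ∂ψ) with hK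
    have hK0 : 0 ≤ K := le_min zero_le_one (mul_nonneg hη.le ((bump_cc _).int_nonneg _))
    simp_rw [← integral_const_mul]
    rw [← integral_finsetSum _ (fun j _ => ((hcc j).integrable hψ).const_mul _),
      ← integral_sub ((B_cc hf hw hψ).integrable hψ)
        (integrable_finsetSum _ (fun j _ => ((hcc j).integrable hψ).const_mul _))]
    have key := int_bound (ψ := ψ) hψ (R := R) (c := Real.exp (-m) * K * C)
      (h := fun y => Real.exp (-∫ x, f (x - y) ∂ψ) * w (-y) -
        ∑ j : t, Real.exp (-∫ x, f (x - j) ∂ψ) * (χ j y * w (-y))) ?_ ?_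
    · refine key.trans ?_
      calc _ = (C * K) * (Real.exp (-m) * m) := by ring
        _ ≤ C * K := mul_le_of_le_one_right (mul_nonneg hC0 hK0) mexp
    · intro y hy
      have hsum : ∑ j : t, χ j y = 1 := by
        have := χ.sum_eq_one (x := y) (by simpa using hy)
        rwa [finsum_eq_sum_of_fintype] at this
      have : Real.exp (-∫ x, f (x - y) ∂ψ) * w (-y) -
          ∑ j : t, Real.exp (-∫ x, f (x - j) ∂ψ) * (χ j y * w (-y)) =
          ∑ j : t, χ j y * ((Real.exp (-∫ x, f (x - y) ∂ψ) - Real.exp (-∫ x, f (x - j) ∂ψ)) * w (-y)) := by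
        rw [← one_mul (Real.exp (-∫ x, f (x - y) ∂ψ) * w (-y)), ← hsum, Finset.sum_mul,
          ← Finset.sum_sub_distrib]
        exact Finset.sum_congr rfl fun j _ => by ring
      simp only [this]
      refine (Finset.abs_sum_le_sum_abs _ _).trans ?_
      rw [← one_mul (Real.exp (-m) * K * C), ← hsum, Finset.sum_mul]
      apply Finset.sum_le_sum
      intro j _
      rw [abs_mul, abs_of_nonneg (χ.nonneg j y)]
      by_cases hj : χ j y = 0
      · rw [hj]; simp
      apply mul_le_mul_of_nonneg_left _ (χ.nonneg j y)
      rw [abs_mul, abs_of_nonneg (hw.nonneg _)]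
      apply mul_le_mul _ (hC _) (hw.nonneg _) (mul_nonneg (Real.exp_pos _).le hK0)
      have hyj : dist y (j : Vec d) < δ := by
        have := hχ j (subset_tsupport _ (Function.mem_support.2 hj))
        simpa using this
      have hjR : ‖(j : Vec d)‖ ≤ R := by simpa using htR j.2
      refine (exp_bound (mass_le hf hfR hψ hy) (mass_le hf hfR hψ hjR)).trans ?_
      apply mul_le_mul_of_nonneg_left _ (Real.exp_pos _).le
      apply min_le_min le_rfl
      rw [← integral_sub ((hf.shift _).integrable hψ) ((hf.shift _).integrable hψ),
        ← integral_const_mul]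
      refine abs_integral_le_integral_abs.trans ?_
      apply integral_mono (((hf.shift _).integrable hψ).sub ((hf.shift _).integrable hψ)).abs
        (((bump_cc _).integrable hψ).const_mul _)
      intro x
      change |f (x - y) - f (x - j)| ≤ η * bump (r + R) x
      by_cases hx : ‖x‖ ≤ r + R
      · rw [bump_eq_one hx, mul_one]
        have := huc (a := x - y) (b := x - j) (by rwa [dist_sub_left])
        exact this.le
      · push Not at hx
        rw [hr (x - y) (by linarith [norm_sub_norm_le x y]),
          hr (x - j) (by linarith [norm_sub_norm_le x (j : Vec d)])]
        simpa using mul_nonneg hη.le ((bump_cc (r + R)).nonneg x)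
    · intro y hy
      simp [hwR (-y) (by simpa using hy)]

end
end MS

namespace MS
variable {d : ℕ}

lemma integrable_of_bdd {Q : Measure (Measure (Vec d))} [IsProbabilityMeasure Q]
    {G : Measure (Vec d) → ℝ} (hG : Measurable G) {C : ℝ} (h : ∀ᵐ ψ ∂Q, |G ψ| ≤ C) :
    Integrable G Q :=
  Integrable.of_bound hG.aestronglyMeasurable C h

lemma int_diff {Q : Measure (Measure (Vec d))} [IsProbabilityMeasure Q]
    {F G H : Measure (Vec d) → ℝ} (hF : Integrable F Q) (hG : Integrable G Q)
    (hH : Integrable H Q) (h : ∀ᵐ ψ ∂Q, |F ψ - G ψ| ≤ H ψ) :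
    |∫ ψ, F ψ ∂Q - ∫ ψ, G ψ ∂Q| ≤ ∫ ψ, H ψ ∂Q := by
  rw [← integral_sub hF hG]
  exact abs_integral_le_integral_abs.trans (integral_mono_ae (hF.sub hG).abs hH h)

lemma main_lim (Q : ℕ → Measure (Measure (Vec d))) (Qlim : Measure (Measure (Vec d)))
    [∀ n, IsProbabilityMeasure (Q n)] [IsProbabilityMeasure Qlim]
    (hbf : ∀ n, ∀ᵐ ψ ∂(Q n), BddFinite ψ) (hbfl : ∀ᵐ ψ ∂Qlim, BddFinite ψ)
    (hconv : ∀ G : Measure (Vec d) → ℝ,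
      @Continuous (Measure (Vec d)) ℝ (vagueTop d) _ G → (∃ C : ℝ, ∀ ψ, |G ψ| ≤ C) →
      Filter.Tendsto (fun n => ∫ ψ, G ψ ∂(Q n)) Filter.atTop (nhds (∫ ψ, G ψ ∂Qlim)))
    (hms : ∀ n, MassStationaryLaw (Q n))
    {f w : Vec d → ℝ} (hf : CC f) (hw : CC w) {R : ℝ} (hR : 0 ≤ R)
    (hfR : ∀ x, ‖x‖ ≤ 2 * R → 1 ≤ f x) (hwR : ∀ x, R < ‖x‖ → w x = 0) :
    ∫⁻ p, Ft f w p ∂(N Qlim) = ∫⁻ p, Ft f w (tau p) ∂(N Qlim) ∧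
      ∫⁻ p, Ft f w p ∂(N Qlim) < ⊤ := by
  obtain ⟨C, hC0, hC⟩ := hw.bdd
  obtain ⟨r, hr0, hr⟩ := hf.ball
  have hA : ∀ Q' : Measure (Measure (Vec d)), IsProbabilityMeasure Q' → (∀ᵐ ψ ∂Q', BddFinite ψ) →
      Integrable (A f w) Q' := by
    intro Q' _ h
    apply integrable_of_bdd (A_meas hf hw) (C := C)
    filter_upwards [h] with ψ hψ
    rw [abs_of_nonneg (A_nonneg hw ψ)]
    exact A_le hf hw hfR hwR hC0 hC hR hψ
  have hB : ∀ Q' : Measure (Measure (Vec d)), IsProbabilityMeasure Q' →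
      Integrable (B f w) Q' := by
    intro Q' _
    apply integrable_of_bdd (B_meas hf hw) (C := C)
    refine Eventually.of_forall fun ψ => ?_
    rw [abs_of_nonneg (B_nonneg hf hw ψ)]
    exact B_le hf hw hfR hwR hC0 hC hR ψ
  have hAB : ∀ n, ∫ ψ, A f w ψ ∂(Q n) = ∫ ψ, B f w ψ ∂(Q n) := by
    intro n
    rw [integral_eq_lintegral_of_nonneg_ae (Eventually.of_forall (A_nonneg hw))
        (A_meas hf hw).aestronglyMeasurable,
      integral_eq_lintegral_of_nonneg_ae (Eventually.of_forall (B_nonneg hf hw))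
        (B_meas hf hw).aestronglyMeasurable, ← lint_A hf hw (Q n) (hbf n), ← lint_B hf hw (Q n),
      ms_imp (Q n) (hbf n) (hms n) (Ft_meas hf hw)]
  -- clamp
  have hcl : ∀ x : ℝ, |max 0 (min C x)| ≤ C := by
    intro x
    rw [abs_of_nonneg (le_max_left _ _)]
    exact max_le hC0 (min_le_left _ _)
  have hcl2 : ∀ x : ℝ, 0 ≤ x → x ≤ C → max 0 (min C x) = x := by
    intro x h1 h2
    rw [min_eq_right h2, max_eq_right h1]
  have hcl3 : ∀ x y : ℝ, |max 0 (min C x) - max 0 (min C y)| ≤ |x - y| := by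
    intro x y
    have h1 := abs_max_sub_max_le_max 0 (min C x) 0 (min C y)
    have h2 := abs_min_sub_min_le_max C x C y
    rw [sub_self, abs_zero] at h1 h2
    exact h1.trans (max_le (abs_nonneg _) (h2.trans (max_le (abs_nonneg _) le_rfl)))
  have hlimA : Tendsto (fun n => ∫ ψ, A f w ψ ∂(Q n)) atTop (𝓝 (∫ ψ, A f w ψ ∂Qlim)) := by
    have h := hconv (fun ψ => max 0 (min C (A f w ψ))) (by
      let := vagueTop d
      have : Continuous (A f w) := (Real.continuous_exp.comp hf.vague.neg).mul hw.vague
      fun_prop) ⟨C, fun ψ => hcl _⟩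
    have e : ∀ Q' : Measure (Measure (Vec d)), (∀ᵐ ψ ∂Q', BddFinite ψ) →
        ∫ ψ, max 0 (min C (A f w ψ)) ∂Q' = ∫ ψ, A f w ψ ∂Q' := by
      intro Q' h
      apply integral_congr_ae
      filter_upwards [h] with ψ hψ
      exact hcl2 _ (A_nonneg hw ψ) (A_le hf hw hfR hwR hC0 hC hR hψ)
    rw [e _ hbfl] at h
    exact h.congr fun n => e _ (hbf n)
  have key : ∀ η : ℝ, 0 < η → |∫ ψ, A f w ψ ∂Qlim - ∫ ψ, B f w ψ ∂Qlim| ≤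
      2 * ∫ ψ, C * min 1 (η * ∫ x, bump (r + R) x ∂ψ) ∂Qlim := by
    intro η hη
    obtain ⟨G, hGc, hGm, hG⟩ := approx hf hw hfR hwR hC0 hC hR hr hη
    have hHb : ∀ ψ : Measure (Vec d), |C * min 1 (η * ∫ x, bump (r + R) x ∂ψ)| ≤ C := by
      intro ψ
      rw [abs_of_nonneg (mul_nonneg hC0 (le_min zero_le_one
        (mul_nonneg hη.le ((bump_cc _).int_nonneg _))))]
      exact mul_le_of_le_one_right hC0 (min_le_left _ _)
    have hHm : Measurable fun ψ : Measure (Vec d) => C * min 1 (η * ∫ x, bump (r + R) x ∂ψ) :=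
      (measurable_const.min ((bump_cc _).measurable_integral.const_mul η)).const_mul C
    have hHi : ∀ Q' : Measure (Measure (Vec d)), IsProbabilityMeasure Q' →
        Integrable (fun ψ : Measure (Vec d) => C * min 1 (η * ∫ x, bump (r + R) x ∂ψ)) Q' :=
      fun Q' _ => integrable_of_bdd hHm (Eventually.of_forall hHb)
    have hGi : ∀ Q' : Measure (Measure (Vec d)), IsProbabilityMeasure Q' →
        Integrable (fun ψ : Measure (Vec d) => max 0 (min C (G ψ))) Q' :=
      fun Q' _ => integrable_of_bdd (measurable_const.max (measurable_const.min hGm))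
        (Eventually.of_forall fun ψ => hcl _)
    have hBG : ∀ Q' : Measure (Measure (Vec d)), IsProbabilityMeasure Q' →
        (∀ᵐ ψ ∂Q', BddFinite ψ) →
        |∫ ψ, B f w ψ ∂Q' - ∫ ψ, max 0 (min C (G ψ)) ∂Q'| ≤
          ∫ ψ, C * min 1 (η * ∫ x, bump (r + R) x ∂ψ) ∂Q' := by
      intro Q' _ h
      apply int_diff (hB Q' inferInstance) (hGi Q' inferInstance) (hHi Q' inferInstance)
      filter_upwards [h] with ψ hψ
      refine le_trans ?_ (hG ψ hψ)
      have := hcl3 (B f w ψ) (G ψ)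
      rwa [hcl2 _ (B_nonneg hf hw ψ) (B_le hf hw hfR hwR hC0 hC hR ψ)] at this
    have hlimG := hconv (fun ψ => max 0 (min C (G ψ))) (by
      let := vagueTop d
      fun_prop) ⟨C, fun ψ => hcl _⟩
    have hlimH := hconv (fun ψ => C * min 1 (η * ∫ x, bump (r + R) x ∂ψ)) (by
      let := vagueTop d
      have := (bump_cc (d := d) (r + R)).vague
      fun_prop) ⟨C, hHb⟩
    have h1 : |∫ ψ, A f w ψ ∂Qlim - ∫ ψ, max 0 (min C (G ψ)) ∂Qlim| ≤
          ∫ ψ, C * min 1 (η * ∫ x, bump (r + R) x ∂ψ) ∂Qlim := by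
      refine le_of_tendsto_of_tendsto' (hlimA.sub hlimG).abs hlimH fun n => ?_
      rw [hAB n]
      exact hBG (Q n) inferInstance (hbf n)
    have h2 := hBG Qlim inferInstance hbfl
    rw [abs_le] at h1 h2 ⊢
    constructor <;> linarith [h1.1, h1.2, h2.1, h2.2]
  have hlim0 : Tendsto (fun n : ℕ => 2 * ∫ ψ, C * min 1 ((1 / ((n : ℝ) + 1)) *
      ∫ x, bump (r + R) x ∂ψ) ∂Qlim) atTop (𝓝 (2 * ∫ ψ : Measure (Vec d), (0 : ℝ) ∂Qlim)) := by
    apply Filter.Tendsto.const_mul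
    apply tendsto_integral_of_dominated_convergence (fun _ => C)
    · intro n
      exact ((measurable_const.min ((bump_cc _).measurable_integral.const_mul _)).const_mul
        C).aestronglyMeasurable
    · exact integrable_const _
    · intro n
      refine Eventually.of_forall fun ψ => ?_
      rw [Real.norm_of_nonneg (mul_nonneg hC0 (le_min zero_le_one
        (mul_nonneg (by positivity) ((bump_cc _).int_nonneg _))))]
      exact mul_le_of_le_one_right hC0 (min_le_left _ _)
    · refine Eventually.of_forall fun ψ => ?_
      have h := (tendsto_one_div_add_atTop_nhds_zero_nat (𝕜 := ℝ)).mul_const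
        (∫ x, bump (d := d) (r + R) x ∂ψ)
      have h' := ((tendsto_const_nhds (x := (1 : ℝ))).min h).const_mul C
      simpa using h'
  have hzero : |∫ ψ, A f w ψ ∂Qlim - ∫ ψ, B f w ψ ∂Qlim| ≤ 2 * ∫ ψ : Measure (Vec d), (0 : ℝ) ∂Qlim :=
    ge_of_tendsto' hlim0 fun n => key _ (by positivity)
  have heq : ∫ ψ, A f w ψ ∂Qlim = ∫ ψ, B f w ψ ∂Qlim := by
    simp only [integral_zero, mul_zero] at hzero
    have := abs_nonpos_iff.1 hzero
    linarith
  rw [lint_A hf hw Qlim hbfl, lint_B hf hw Qlim,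
    ← ofReal_integral_eq_lintegral_ofReal (hA Qlim inferInstance hbfl)
      (Eventually.of_forall (A_nonneg hw)),
    ← ofReal_integral_eq_lintegral_ofReal (hB Qlim inferInstance)
      (Eventually.of_forall (B_nonneg hf hw)), heq]
  exact ⟨rfl, ENNReal.ofReal_lt_top⟩

end MS

namespace MS
variable {d : ℕ}

lemma ae_N {Q : Measure (Measure (Vec d))} [SFinite Q] (hbf : ∀ᵐ ψ ∂Q, BddFinite ψ) :
    ∀ᵐ p ∂(N Q), BddFinite p.1 := by
  have hm : MeasurableSet {p : X d | ¬ BddFinite p.1} := (meas_bf.preimage measurable_fst).compl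
  rw [ae_iff, ← lintegral_indicator_one hm, lint_N Q (measurable_one.indicator hm),
    lintegral_eq_zero_of_ae_eq_zero]
  filter_upwards [hbf] with ψ hψ
  simp [Set.indicator, hψ]

abbrev Ec (d : ℕ) := (Idx d → unitInterval) × Vec d

def Phi (p : X d) : Ec d :=
  (fun i => ⟨Real.exp (-∫ x, fam i x ∂(rho p.1)), (Real.exp_pos _).le,
    Real.exp_le_one_iff.2 (neg_nonpos.2 ((fam_cc i).int_nonneg _))⟩, p.2)

lemma measurable_Phi : Measurable (Phi (d := d)) := by
  refine Measurable.prodMk (measurable_pi_lambda _ fun i => Measurable.subtype_mk ?_) measurable_snd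
  exact Real.measurable_exp.comp
    (((fam_cc i).measurable_integral.comp measurable_rho).comp measurable_fst).neg

lemma comap_Phi {s : Set (X d)} (hs : MeasurableSet s) :
    ∃ t : Set (Ec d), MeasurableSet t ∧ Phi ⁻¹' t = {p | (rho p.1, p.2) ∈ s} := by
  have h : Measurable[MeasurableSpace.comap Phi inferInstance]
      (fun p : X d => (rho p.1, p.2)) := by
    have hPhi : Measurable[MeasurableSpace.comap Phi inferInstance] (Phi (d := d)) :=
      comap_measurable _
    have h2 : Measurable[MeasurableSpace.comap Phi inferInstance] (fun p : X d => p.2) := by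
      have h2' : Measurable (fun q : Ec d => q.2) := measurable_snd
      exact h2'.comp hPhi
    have h1 : Measurable[MeasurableSpace.comap Phi inferInstance] (fun p : X d => rho p.1) := by
      refine @measurable_of_fam d (X d) (MeasurableSpace.comap Phi inferInstance) _
        (fun p => rho_bf _) fun i => ?_
      have h3 : Measurable (fun q : Ec d => -Real.log (q.1 i : ℝ)) := by fun_prop
      have h4 := h3.comp hPhi
      convert h4 using 1
      ext p
      simp [Phi]
    exact h1.prodMk h2
  exact h hs

def Sm (d : ℕ) : Submonoid (BoundedContinuousFunction (Ec d) ℝ) where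
  carrier := {e | ∃ F w : Vec d → ℝ, CC F ∧ Continuous w ∧ (∀ x, 0 ≤ w x) ∧
    ∀ ψ y, BddFinite ψ → e (Phi (ψ, y)) = Real.exp (-∫ x, F x ∂ψ) * w y}
  one_mem' := ⟨fun _ => 0, fun _ => 1, CC.zero, continuous_const, fun _ => zero_le_one,
    fun ψ y _ => by simp⟩
  mul_mem' := by
    rintro e e' ⟨F, w, hF, hw, hw0, h⟩ ⟨F', w', hF', hw', hw0', h'⟩
    refine ⟨fun x => F x + F' x, fun x => w x * w' x, hF.add hF', hw.mul hw',
      fun x => mul_nonneg (hw0 x) (hw0' x), fun ψ y hψ => ?_⟩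
    rw [BoundedContinuousFunction.mul_apply, h ψ y hψ, h' ψ y hψ,
      integral_add (hF.integrable hψ) (hF'.integrable hψ), neg_add, Real.exp_add]
    ring

def coordB (i : Idx d) : BoundedContinuousFunction (Ec d) ℝ :=
  BoundedContinuousFunction.ofNormedAddCommGroup (fun q => (q.1 i : ℝ)) (by fun_prop) 1
    (fun q => by rw [Real.norm_of_nonneg (q.1 i).2.1]; exact (q.1 i).2.2)

def distB (y₀ : Vec d) : BoundedContinuousFunction (Ec d) ℝ :=
  BoundedContinuousFunction.ofNormedAddCommGroup (fun q => min 1 ‖q.2 - y₀‖) (by fun_prop) 1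
    (fun q => by
      rw [Real.norm_of_nonneg (le_min zero_le_one (norm_nonneg _))]; exact min_le_left _ _)

lemma coordB_mem (i : Idx d) : coordB i ∈ Sm d :=
  ⟨fam i, fun _ => 1, fam_cc i, continuous_const, fun _ => zero_le_one, fun ψ y hψ => by
    simp [coordB, Phi, rho_of hψ]⟩

lemma distB_mem (y₀ : Vec d) : distB y₀ ∈ Sm d :=
  ⟨fun _ => 0, fun y => min 1 ‖y - y₀‖, CC.zero, by fun_prop,
    fun _ => le_min zero_le_one (norm_nonneg _), fun ψ y hψ => by simp [distB, Phi]⟩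

def Alg (d : ℕ) : StarSubalgebra ℝ (BoundedContinuousFunction (Ec d) ℝ) :=
  { Algebra.adjoin ℝ (Sm d : Set (BoundedContinuousFunction (Ec d) ℝ)) with
    star_mem' := fun {a} ha => by
      have : star a = a := by ext x; simp
      rwa [this] }

lemma mem_Alg {e : BoundedContinuousFunction (Ec d) ℝ} :
    e ∈ Alg d ↔ e ∈ Algebra.adjoin ℝ (Sm d : Set (BoundedContinuousFunction (Ec d) ℝ)) := Iff.rfl

lemma sep_Alg : ((Alg d).map
    (BoundedContinuousFunction.toContinuousMapStarₐ ℝ)).SeparatesPoints := by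
  rintro ⟨x, y⟩ ⟨x', y'⟩ hne
  by_cases hy : y = y'
  · have hx : x ≠ x' := fun h => hne (by rw [h, hy])
    obtain ⟨i, hi⟩ := Function.ne_iff.1 hx
    refine ⟨coordB i, ⟨_, ⟨coordB i, Algebra.subset_adjoin (coordB_mem i), rfl⟩, rfl⟩, ?_⟩
    simpa [coordB, Subtype.ext_iff] using hi
  · refine ⟨distB y, ⟨_, ⟨distB y, Algebra.subset_adjoin (distB_mem y), rfl⟩, rfl⟩, ?_⟩
    have : 0 < min 1 ‖y' - y‖ := lt_min one_pos (norm_pos_iff.2 (sub_ne_zero.2 (Ne.symm hy)))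
    simpa [distB] using this.ne

lemma ext_meas (μ ν : Measure (X d)) [IsFiniteMeasure μ] [IsFiniteMeasure ν]
    (hμ : ∀ᵐ p ∂μ, BddFinite p.1) (hν : ∀ᵐ p ∂ν, BddFinite p.1)
    (h : ∀ F w : Vec d → ℝ, CC F → Continuous w → (∀ x, 0 ≤ w x) →
      ∫⁻ p, ENNReal.ofReal (Real.exp (-∫ x, F x ∂p.1) * w p.2) ∂μ =
      ∫⁻ p, ENNReal.ofReal (Real.exp (-∫ x, F x ∂p.1) * w p.2) ∂ν) : μ = ν := by
  have hmap : μ.map Phi = ν.map Phi := by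
    apply ext_of_forall_mem_subalgebra_integral_eq_of_polish (𝕜 := ℝ) (sep_Alg (d := d))
    intro e he
    rw [mem_Alg, ← Subalgebra.mem_toSubmodule, Algebra.adjoin_eq_span, Submonoid.closure_eq] at he
    induction he using Submodule.span_induction with
    | mem e he =>
      obtain ⟨F, w, hF, hw, hw0, he⟩ := he
      have key : ∀ μ : Measure (X d), (∀ᵐ p ∂μ, BddFinite p.1) →
          ∫ x, e x ∂(μ.map Phi) =
          (∫⁻ p, ENNReal.ofReal (Real.exp (-∫ x, F x ∂p.1) * w p.2) ∂μ).toReal := by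
        intro μ hμ
        rw [integral_map measurable_Phi.aemeasurable
          e.continuous.measurable.aestronglyMeasurable]
        have : (fun p => e (Phi p)) =ᵐ[μ] fun p => Real.exp (-∫ x, F x ∂p.1) * w p.2 := by
          filter_upwards [hμ] with p hp
          exact he p.1 p.2 hp
        rw [integral_congr_ae this, integral_eq_lintegral_of_nonneg_ae]
        · exact Eventually.of_forall fun p => mul_nonneg (Real.exp_pos _).le (hw0 _)
        · exact ((Real.measurable_exp.comp (hF.measurable_integral.comp measurable_fst).neg).mul
            (hw.measurable.comp measurable_snd)).aestronglyMeasurable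
      rw [key μ hμ, key ν hν, h F w hF hw hw0]
    | zero => simp
    | add a b _ _ ha hb =>
      simp only [BoundedContinuousFunction.add_apply]
      rw [integral_add (a.integrable _) (b.integrable _),
        integral_add (a.integrable _) (b.integrable _), ha, hb]
    | smul c a _ ha =>
      simp only [BoundedContinuousFunction.smul_apply]
      rw [integral_smul, integral_smul, ha]
  ext s hs
  obtain ⟨t, ht, hts⟩ := comap_Phi hs
  have key : ∀ μ : Measure (X d), (∀ᵐ p ∂μ, BddFinite p.1) → μ s = μ.map Phi t := by
    intro μ hμ
    rw [Measure.map_apply measurable_Phi ht, hts]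
    apply measure_congr
    filter_upwards [hμ] with p hp
    have : (rho p.1, p.2) = p := by rw [rho_of hp]
    apply propext
    change p ∈ s ↔ (rho p.1, p.2) ∈ s
    rw [this]
  rw [key μ hμ, key ν hν, hmap]

lemma final (Q : ℕ → Measure (Measure (Vec d))) (Qlim : Measure (Measure (Vec d)))
    [∀ n, IsProbabilityMeasure (Q n)] [IsProbabilityMeasure Qlim]
    (hbf : ∀ n, ∀ᵐ ψ ∂(Q n), BddFinite ψ) (hbfl : ∀ᵐ ψ ∂Qlim, BddFinite ψ)
    (hconv : ∀ G : Measure (Vec d) → ℝ,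
      @Continuous (Measure (Vec d)) ℝ (vagueTop d) _ G → (∃ C : ℝ, ∀ ψ, |G ψ| ≤ C) →
      Filter.Tendsto (fun n => ∫ ψ, G ψ ∂(Q n)) Filter.atTop (nhds (∫ ψ, G ψ ∂Qlim)))
    (hms : ∀ n, MassStationaryLaw (Q n)) :
    MassStationaryLaw Qlim := by
  apply ms_of Qlim hbfl
  have haN := ae_N hbfl
  have haT : ∀ᵐ p ∂((N Qlim).map tau), BddFinite p.1 :=
    (ae_map_iff measurable_tau.aemeasurable (meas_bf.preimage measurable_fst)).2
      (Eventually.of_forall fun p => shift_bf (rho_bf _))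
  have hW : ∀ R : ℕ, Measurable (Ft (d := d) (bump (2 * (R + 1))) (bump R)) :=
    fun R => Ft_meas (bump_cc _) (bump_cc _)
  have hlim : ∀ (R : ℕ) (F w : Vec d → ℝ), CC F → Continuous w → (∀ x, 0 ≤ w x) →
      ∫⁻ p, Ft (fun x => bump (2 * (R + 1)) x + F x) (fun y => w y * bump R y) p ∂(N Qlim) =
      ∫⁻ p, Ft (fun x => bump (2 * (R + 1)) x + F x) (fun y => w y * bump R y) (tau p) ∂(N Qlim) ∧
      ∫⁻ p, Ft (fun x => bump (2 * (R + 1)) x + F x) (fun y => w y * bump R y) p ∂(N Qlim) < ⊤ := by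
    intro R F w hF hw hw0
    apply main_lim Q Qlim hbf hbfl hconv hms ((bump_cc _).add hF) ((bump_cc _).mul hw hw0)
      (R := R + 1) (by positivity)
    · intro x hx
      rw [bump_eq_one hx]
      linarith [hF.nonneg x]
    · intro x hx
      rw [bump_eq_zero hx.le, mul_zero]
  have hprod : ∀ (R : ℕ) (F w : Vec d → ℝ), CC F → (∀ x, 0 ≤ w x) → ∀ p : X d, BddFinite p.1 →
      Ft (bump (2 * (R + 1))) (bump R) p * ENNReal.ofReal (Real.exp (-∫ x, F x ∂p.1) * w p.2) =
      Ft (fun x => bump (2 * (R + 1)) x + F x) (fun y => w y * bump R y) p := by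
    intro R F w hF hw0 p hp
    unfold Ft
    rw [← ENNReal.ofReal_mul (mul_nonneg (Real.exp_pos _).le ((bump_cc _).nonneg _)),
      integral_add ((bump_cc _).integrable hp) (hF.integrable hp), neg_add, Real.exp_add]
    congr 1; ring
  have hfin : ∀ R : ℕ, ∫⁻ p, Ft (bump (2 * (R + 1))) (bump R) p ∂(N Qlim) < ⊤ ∧
      ∫⁻ p, Ft (bump (2 * (R + 1))) (bump R) p ∂((N Qlim).map tau) < ⊤ := by
    intro R
    have := hlim R (fun _ => 0) (fun _ => 1) CC.zero continuous_const (fun _ => zero_le_one)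
    simp only [add_zero, one_mul] at this
    rw [lintegral_map (hW R) measurable_tau, ← this.1]
    exact ⟨this.2, this.2⟩
  have hmeas : ∀ R : ℕ, (N Qlim).withDensity (Ft (bump (2 * (R + 1))) (bump R)) =
      ((N Qlim).map tau).withDensity (Ft (bump (2 * (R + 1))) (bump R)) := by
    intro R
    have i1 := isFiniteMeasure_withDensity (hfin R).1.ne
    have i2 := isFiniteMeasure_withDensity (hfin R).2.ne
    apply ext_meas
    · exact (withDensity_absolutelyContinuous _ _).ae_le haN
    · exact (withDensity_absolutelyContinuous _ _).ae_le haT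
    · intro F w hF hw hw0
      have hmF : Measurable fun p : X d => ENNReal.ofReal (Real.exp (-∫ x, F x ∂p.1) * w p.2) :=
        ((Real.measurable_exp.comp (hF.measurable_integral.comp measurable_fst).neg).mul
            (hw.measurable.comp measurable_snd)).ennreal_ofReal
      rw [lintegral_withDensity_eq_lintegral_mul _ (hW R) hmF,
        lintegral_withDensity_eq_lintegral_mul _ (hW R) hmF]
      have e1 : ∀ μ : Measure (X d), (∀ᵐ p ∂μ, BddFinite p.1) →
          ∫⁻ p, ((Ft (bump (2 * (R + 1))) (bump R) : X d → ℝ≥0∞) * (fun p : X d =>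
            ENNReal.ofReal (Real.exp (-∫ x, F x ∂p.1) * w p.2)) : X d → ℝ≥0∞) p ∂μ =
          ∫⁻ p, Ft (fun x => bump (2 * (R + 1)) x + F x) (fun y => w y * bump R y) p ∂μ := by
        intro μ hμ
        apply lintegral_congr_ae
        filter_upwards [hμ] with p hp
        exact hprod R F w hF hw0 p hp
      rw [e1 _ haN, e1 _ haT, lintegral_map (Ft_meas ((bump_cc _).add hF)
        ((bump_cc _).mul hw hw0)) measurable_tau]
      exact (hlim R F w hF hw hw0).1
  intro F hF
  rw [← lintegral_map hF measurable_tau]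
  have hD : ∀ R : ℕ, MeasurableSet {p : X d | ⌊‖p.2‖⌋₊ = R} := fun R =>
    (Nat.measurable_floor.comp measurable_snd.norm) (measurableSet_singleton R)
  have hsplit : ∀ p : X d, F p = ∑' R : ℕ, {p : X d | ⌊‖p.2‖⌋₊ = R}.indicator F p := by
    intro p
    rw [tsum_eq_single ⌊‖p.2‖⌋₊]
    · rw [Set.indicator_of_mem]; exact rfl
    · intro R hR
      rw [Set.indicator_of_notMem]
      exact fun h => hR h.symm
  have hpiece : ∀ R : ℕ, ∫⁻ p, {p : X d | ⌊‖p.2‖⌋₊ = R}.indicator F p ∂(N Qlim) =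
      ∫⁻ p, {p : X d | ⌊‖p.2‖⌋₊ = R}.indicator F p ∂((N Qlim).map tau) := by
    intro R
    have hmi : Measurable ({p : X d | ⌊‖p.2‖⌋₊ = R}.indicator F) := hF.indicator (hD R)
    have e1 : {p : X d | ⌊‖p.2‖⌋₊ = R}.indicator F = Ft (bump (2 * (R + 1))) (bump R) * (fun p =>
        (Ft (bump (2 * (R + 1))) (bump R) p)⁻¹ * {p : X d | ⌊‖p.2‖⌋₊ = R}.indicator F p) := by
      ext p
      rw [Pi.mul_apply, ← mul_assoc]
      by_cases hp : p ∈ {p : X d | ⌊‖p.2‖⌋₊ = R}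
      · rw [ENNReal.mul_inv_cancel, one_mul]
        · unfold Ft
          rw [Ne, ENNReal.ofReal_eq_zero, not_le]
          apply mul_pos (Real.exp_pos _) (bump_pos _)
          have := Nat.lt_floor_add_one ‖p.2‖
          have hp' : ⌊‖p.2‖⌋₊ = R := hp
          rwa [hp'] at this
        · exact ENNReal.ofReal_ne_top
      · rw [Set.indicator_of_notMem hp, mul_zero]
    have hm2 : Measurable (fun p : X d => (Ft (bump (2 * (R + 1))) (bump R) p)⁻¹ *
        {p : X d | ⌊‖p.2‖⌋₊ = R}.indicator F p) := (hW R).inv.mul hmi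
    rw [e1, ← lintegral_withDensity_eq_lintegral_mul _ (hW R) hm2, hmeas R,
      lintegral_withDensity_eq_lintegral_mul _ (hW R) hm2]
  simp_rw [hsplit]
  rw [lintegral_tsum fun R => (hF.indicator (hD R)).aemeasurable,
    lintegral_tsum fun R => (hF.indicator (hD R)).aemeasurable]
  exact tsum_congr hpiece

end MS


/-- Mass-stationarity is preserved under convergence in distribution with
respect to the vague topology: if the laws `Q n` of mass-stationary random measures converge
weakly (tested against all bounded vaguely-continuous functions) to the law `Qlim` of a random
measure, then `Qlim` is mass-stationary. -/
theorem stmt11 {d : ℕ} (Q : ℕ → Measure (Measure (Vec d))) (Qlim : Measure (Measure (Vec d)))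
    [∀ n, IsProbabilityMeasure (Q n)] [IsProbabilityMeasure Qlim]
    (hbf : ∀ n, ∀ᵐ ψ ∂(Q n), BddFinite ψ) (hbfl : ∀ᵐ ψ ∂Qlim, BddFinite ψ)
    (hconv : ∀ G : Measure (Vec d) → ℝ,
      @Continuous (Measure (Vec d)) ℝ (vagueTop d) _ G → (∃ C : ℝ, ∀ ψ, |G ψ| ≤ C) →
      Filter.Tendsto (fun n => ∫ ψ, G ψ ∂(Q n)) Filter.atTop (nhds (∫ ψ, G ψ ∂Qlim)))
    (hms : ∀ n, MassStationaryLaw (Q n)) :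
    MassStationaryLaw Qlim := by
  exact MS.final Q Qlim hbf hbfl hconv hms
end
end
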